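/- arXiv:1607.01113 — 3 statements merged into one kernel-verified Lean document; each statement's English description precedes it below -/
import Mathlib

section
/- Let ν ∈ (−1/2,1), β > 5 and w(v) = (1+|v|)^β. There exists a constant C_β(ν) > 0, depending only on β and ν, such that for every measurable F₀ ≥ 0 with ∥wF₀∥_{L∞} < ∞ and every nonnegative mild solution F of the ES-BGK equation with initial datum F₀, setting t₁ = (4C_β(ν)∥wF₀∥_{L∞})^{−1}, one has ∥wF(t)∥_{L∞} ≤ 2∥wF₀∥_{L∞} for all t ∈ [0, t₁]. -/
open MeasureTheory Real Matrix ENNReal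

noncomputable section

/-- Velocity/position space `ℝ³`. -/
abbrev E3 : Type := EuclideanSpace ℝ (Fin 3)

/-- The normalized global Maxwellian `μ(v) = (2π)^{-3/2} exp(-|v|²/2)`. -/
def Mw (v : E3) : ℝ := (2 * π) ^ (-(3 : ℝ) / 2) * Real.exp (-‖v‖ ^ 2 / 2)

/-- Density `ρ = ∫ g dv`. -/
def dens (g : E3 → ℝ) : ℝ := ∫ v, g v

/-- Bulk velocity `u = ρ⁻¹ ∫ v g dv`. -/
def bulk (g : E3 → ℝ) : E3 := (dens g)⁻¹ • ∫ v, g v • v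

/-- Temperature `T = (3ρ)⁻¹ ∫ |v-u|² g dv`. -/
def temp (g : E3 → ℝ) : ℝ := (3 * dens g)⁻¹ * ∫ v, ‖v - bulk g‖ ^ 2 * g v

/-- Stress tensor `Θ = ρ⁻¹ ∫ (v-u)⊗(v-u) g dv`. -/
def stress (g : E3 → ℝ) : Matrix (Fin 3) (Fin 3) ℝ :=
  Matrix.of fun i j => (dens g)⁻¹ * ∫ v, (v - bulk g) i * (v - bulk g) j * g v

/-- Temperature tensor `𝒯_ν = (1-ν) T Id + ν Θ`. -/
def tempTensor (g : E3 → ℝ) (ν : ℝ) : Matrix (Fin 3) (Fin 3) ℝ :=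
  ((1 - ν) * temp g) • (1 : Matrix (Fin 3) (Fin 3) ℝ) + ν • stress g

/-- Anisotropic Gaussian `M_ν = ρ det(2π𝒯_ν)^{-1/2} exp(-½ (v-u)ᵀ𝒯_ν⁻¹(v-u))`. -/
def aGauss (g : E3 → ℝ) (ν : ℝ) (v : E3) : ℝ :=
  dens g / Real.sqrt (((2 * π) • tempTensor g ν).det) *
    Real.exp (-(1 / 2) *
      ((fun i => (v - bulk g) i) ⬝ᵥ ((tempTensor g ν)⁻¹ *ᵥ fun i => (v - bulk g) i)))

/-- Collision frequency `A_ν = ρT/(1-ν)`. -/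
def collFreq (g : E3 → ℝ) (ν : ℝ) : ℝ := dens g * temp g / (1 - ν)

/-- Weighted sup-norm `‖w f‖_{L^∞} = sup_{x,v} (1+|v|)^β f(x,v)`. -/
def wSup (β : ℝ) (f : E3 → E3 → ℝ) : ℝ :=
  ⨆ p : E3 × E3, (1 + ‖p.2‖) ^ β * f p.1 p.2

/-- Finiteness of the weighted sup-norm. -/
def WBdd (β : ℝ) (f : E3 → E3 → ℝ) : Prop :=
  BddAbove (Set.range fun p : E3 × E3 => (1 + ‖p.2‖) ^ β * f p.1 p.2)

/-- A (global-in-time) mild solution of the ES-BGK equation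
`∂ₜF + v·∇ₓF = A_ν (M_ν - F)` with initial datum `F₀`. -/
structure IsMildSolution (ν β : ℝ) (F₀ : E3 → E3 → ℝ) (F : ℝ → E3 → E3 → ℝ) : Prop where
  nonneg : ∀ t, 0 ≤ t → ∀ x v, 0 ≤ F t x v
  meas : ∀ t, 0 ≤ t → Measurable fun p : E3 × E3 => F t p.1 p.2
  integrable : ∀ t, 0 ≤ t → ∀ x, Integrable (F t x)
  moment2 : ∀ t, 0 ≤ t → ∀ x, Integrable fun v => ‖v‖ ^ 2 * F t x v
  dens_pos : ∀ t, 0 ≤ t → ∀ x, 0 < dens (F t x)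
  temp_pos : ∀ t, 0 ≤ t → ∀ x, 0 < temp (F t x)
  wnorm_bdd : ∀ t, 0 ≤ t → WBdd β (F t)
  wnorm_cont : ContinuousOn (fun t => wSup β (F t)) (Set.Ici 0)
  mild : ∀ t, 0 ≤ t → ∀ x v,
    F t x v = F₀ (x - t • v) v *
        Real.exp (-(∫ τ in (0 : ℝ)..t, collFreq (F τ (x - (t - τ) • v)) ν))
      + ∫ s in (0 : ℝ)..t,
          Real.exp (-(∫ τ in s..t, collFreq (F τ (x - (t - τ) • v)) ν)) *
            collFreq (F s (x - (t - s) • v)) ν * aGauss (F s (x - (t - s) • v)) ν v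

/-- The entropy functional `ℰ(F₀)`. -/
def entE (F₀ : E3 → E3 → ℝ) : ℝ :=
  (∫ p : E3 × E3, (F₀ p.1 p.2 * Real.log (F₀ p.1 p.2) - Mw p.2 * Real.log (Mw p.2)))
    + (3 / 2 * Real.log (2 * π) - 1) * (∫ p : E3 × E3, (F₀ p.1 p.2 - Mw p.2))
    + 1 / 2 * ∫ p : E3 × E3, ‖p.2‖ ^ 2 * (F₀ p.1 p.2 - Mw p.2)

/-- Componentwise absolute value of `∫ (1, v, |v|², v⊗v) (f - μ) dv`. -/
def momentGap (f : E3 → ℝ) : ℝ :=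
  |∫ v, (f v - Mw v)| ⊔ (⨆ i : Fin 3, |∫ v, v i * (f v - Mw v)|) ⊔
    |∫ v, ‖v‖ ^ 2 * (f v - Mw v)| ⊔
    ⨆ ij : Fin 3 × Fin 3, |∫ v, v ij.1 * v ij.2 * (f v - Mw v)|

/-- `N_q(g) = sup_v (1+|v|)^q g(v)`, valued in `ℝ≥0∞`. -/
def Nq (q : ℝ) (g : E3 → ℝ) : ℝ≥0∞ :=
  ⨆ v : E3, ENNReal.ofReal ((1 + ‖v‖) ^ q * g v)

end

/-!
The gain term `A_ν M_ν` is quadratic in the weighted norm `N = ‖w g‖_∞` of the velocity profile `g`.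
Since `β > 5`, the energy bounds the pressure `ρT`, hence `A_ν`, by a multiple of `N`. The stress
tensor satisfies `0 ≤ Θ ≤ 3T·Id`, so for `-1/2 < ν < 1` the tensor `𝒯_ν` lies between multiples of
`T·Id`, and `M_ν` is at most a multiple of `ρ T^{-3/2}` times an isotropic Gaussian of variance
comparable to `T` about `u`. It remains to see that `ρ (1 + |u|)^β` and `ρ T^{β/2}` are at most a
multiple of `N T^{3/2}`. For the second, split the energy at `|v| = √T`: the ball holds at most
`ρT` of the total, which is at least `3ρT`, and the tail integral scales like `N T^{(5-β)/2}`. The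
first follows from the second if `1 + |u| ≤ 6√T`. Otherwise `w` is comparable to `(1 + |u|)^β` on
the ball of radius `3√T` about `u`, which carries at least two thirds of the mass by Chebyshev.

Duhamel's formula then gives `‖w F(t)‖ ≤ ‖w F₀‖ + C (2‖w F₀‖)² t` as long as `‖w F‖` has not
reached `2‖w F₀‖`; up to time `t₁` the right-hand side is smaller than `2‖w F₀‖`, so by continuity
this level is never reached.
-/

namespace ESBGK

section RealAnalysis

lemma forall_Icc_lt_of_forall_Ico_lt {α γ : Type*} [LinearOrder α] [TopologicalSpace α]
    [CompactIccSpace α] [OrderClosedTopology α] [LinearOrder γ] [TopologicalSpace γ]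
    [ClosedIciTopology γ] {f : α → γ} {a b : α} {B : γ} (hf : ContinuousOn f (Set.Icc a b))
    (hstep : ∀ t ∈ Set.Icc a b, (∀ s ∈ Set.Ico a t, f s < B) → f t < B) :
    ∀ t ∈ Set.Icc a b, f t < B := by
  by_contra! hexceeds
  have hcompact : IsCompact (Set.Icc a b ∩ f ⁻¹' Set.Ici B) :=
    isCompact_Icc.of_isClosed_subset (hf.preimage_isClosed_of_isClosed isClosed_Icc isClosed_Ici)
      Set.inter_subset_left
  obtain ⟨m, ⟨hm, hBm⟩, hfirst⟩ := hcompact.exists_isLeast hexceeds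
  refine (hstep m hm fun s hs => ?_).not_ge hBm
  by_contra! hBs
  exact (hfirst ⟨⟨hs.1, hs.2.le.trans hm.2⟩, hBs⟩).not_gt hs.2

lemma duhamel_le {a m : ℝ → ℝ} {t₀ t f₀ G : ℝ} (ht : t₀ ≤ t)
    (ha : ∀ s ∈ Set.Icc t₀ t, 0 ≤ a s) (hf₀ : 0 ≤ f₀) (hm : ∀ s ∈ Set.Ico t₀ t, 0 ≤ m s)
    (hG : ∀ s ∈ Set.Ico t₀ t, a s * m s ≤ G) :
    f₀ * exp (-∫ τ in t₀..t, a τ) + ∫ s in t₀..t, exp (-∫ τ in s..t, a τ) * a s * m s ≤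
      f₀ + G * (t - t₀) := by
  have hdecay : ∀ s ∈ Set.Icc t₀ t, exp (-∫ τ in s..t, a τ) ≤ 1 := fun s hs =>
    exp_le_one_iff.2 <| neg_nonpos.2 <|
      intervalIntegral.integral_nonneg hs.2 fun τ hτ => ha τ ⟨hs.1.trans hτ.1, hτ.2⟩
  have hintegrand : ∀ s ∈ Set.Ico t₀ t, ‖exp (-∫ τ in s..t, a τ) * a s * m s‖ ≤ G := by
    intro s hs
    have hs' := Set.Ico_subset_Icc_self hs
    have ham : 0 ≤ a s * m s := mul_nonneg (ha s hs') (hm s hs)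
    rw [mul_assoc, norm_of_nonneg (mul_nonneg (exp_pos _).le ham)]
    exact (mul_le_of_le_one_left ham (hdecay s hs')).trans (hG s hs)
  have hgain : ∫ s in t₀..t, exp (-∫ τ in s..t, a τ) * a s * m s ≤ G * |t - t₀| := by
    refine (le_norm_self _).trans (intervalIntegral.norm_integral_le_of_norm_le_const_ae ?_)
    filter_upwards [Measure.ae_ne volume t] with s hst hs
    rw [Set.uIoc_of_le ht] at hs
    exact hintegrand s ⟨hs.1.le, hs.2.lt_of_ne hst⟩
  rw [abs_of_nonneg (sub_nonneg.2 ht)] at hgain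
  exact add_le_add (mul_le_of_le_one_right hf₀ (hdecay t₀ ⟨le_rfl, ht⟩)) hgain

lemma rpow_mul_exp_neg_mul_sq_le {p b y : ℝ} (hp : 0 < p) (hb : 0 < b) (hy : 0 ≤ y) :
    y ^ p * exp (-(b * y ^ 2)) ≤ (p / (2 * b)) ^ (p / 2) := by
  set c := p / (2 * b) with hc
  have hc0 : 0 < c := by positivity
  rw [exp_neg, ← div_eq_mul_inv, div_le_iff₀ (exp_pos _)]
  calc y ^ p = (c * (y ^ 2 / c)) ^ (p / 2) := by
        rw [mul_div_cancel₀ _ hc0.ne', ← rpow_natCast_mul hy]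
        congr 1
        push_cast
        ring
    _ = c ^ (p / 2) * (y ^ 2 / c) ^ (p / 2) := mul_rpow hc0.le (by positivity)
    _ ≤ c ^ (p / 2) * exp (y ^ 2 / c) ^ (p / 2) := by
        gcongr
        linarith [add_one_le_exp (y ^ 2 / c)]
    _ = c ^ (p / 2) * exp (b * y ^ 2) := by
        rw [← exp_mul, hc]
        congr 2
        field_simp

lemma add_rpow_le_mul_rpow_add_rpow {a b p : ℝ} (ha : 0 ≤ a) (hb : 0 ≤ b) (hp : 1 ≤ p) :
    (a + b) ^ p ≤ 2 ^ (p - 1) * (a ^ p + b ^ p) := by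
  lift a to NNReal using ha
  lift b to NNReal using hb
  exact_mod_cast NNReal.rpow_add_le_mul_rpow_add_rpow a b hp

lemma one_add_norm_rpow_mul_exp_le {E : Type*} [SeminormedAddCommGroup E] {p θ : ℝ} (hp : 1 ≤ p)
    (hθ : 0 < θ) (u v : E) :
    (1 + ‖v‖) ^ p * exp (-(‖v - u‖ ^ 2 / (2 * θ))) ≤
      2 ^ (p - 1) * ((1 + ‖u‖) ^ p + (p * θ) ^ (p / 2)) := by
  have htriangle : 1 + ‖v‖ ≤ (1 + ‖u‖) + ‖v - u‖ := by linarith [norm_le_norm_add_norm_sub' v u]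
  have hexp_le_one : exp (-(‖v - u‖ ^ 2 / (2 * θ))) ≤ 1 :=
    exp_le_one_iff.2 (neg_nonpos.2 (by positivity))
  have hgauss : ‖v - u‖ ^ p * exp (-(‖v - u‖ ^ 2 / (2 * θ))) ≤ (p * θ) ^ (p / 2) := by
    have h := rpow_mul_exp_neg_mul_sq_le (p := p) (b := (2 * θ)⁻¹) (by linarith) (by positivity)
      (norm_nonneg (v - u))
    rwa [← div_eq_inv_mul, show p / (2 * (2 * θ)⁻¹) = p * θ by field_simp] at h
  calc (1 + ‖v‖) ^ p * exp (-(‖v - u‖ ^ 2 / (2 * θ)))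
      ≤ 2 ^ (p - 1) * ((1 + ‖u‖) ^ p + ‖v - u‖ ^ p) * exp (-(‖v - u‖ ^ 2 / (2 * θ))) := by
        gcongr
        exact (rpow_le_rpow (by positivity) htriangle (by linarith)).trans
          (add_rpow_le_mul_rpow_add_rpow (by positivity) (norm_nonneg _) hp)
    _ = 2 ^ (p - 1) * ((1 + ‖u‖) ^ p * exp (-(‖v - u‖ ^ 2 / (2 * θ))) +
          ‖v - u‖ ^ p * exp (-(‖v - u‖ ^ 2 / (2 * θ)))) := by ring
    _ ≤ 2 ^ (p - 1) * ((1 + ‖u‖) ^ p + (p * θ) ^ (p / 2)) := by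
        gcongr
        exact mul_le_of_le_one_right (by positivity) hexp_le_one

lemma le_mul_rpow_neg_of_rpow_mul_le {a r y p N : ℝ} (hr : 0 < r) (hra : r ≤ a) (hp : 0 ≤ p)
    (hy : 0 ≤ y) (h : a ^ p * y ≤ N) : y ≤ N * r ^ (-p) := by
  rw [rpow_neg hr.le, ← div_eq_mul_inv, le_div_iff₀ (by positivity), mul_comm]
  exact (mul_le_mul_of_nonneg_right (rpow_le_rpow hr.le hra hp) hy).trans h

lemma sq_mul_rpow_neg {y : ℝ} (hy : 0 < y) (p : ℝ) : y ^ 2 * y ^ (-p) = y ^ (2 - p) := by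
  rw [sub_eq_add_neg, Real.rpow_add hy, Real.rpow_two]

end RealAnalysis

section OrderedModule

variable {𝕜 M : Type*} [Ring 𝕜] [LinearOrder 𝕜] [AddCommGroup M] [PartialOrder M]
  [IsOrderedAddMonoid M] [Module 𝕜 M] [PosSMulMono 𝕜 M] [SMulPosMono 𝕜 M]
  {a b : 𝕜} {e x : M}

lemma min_smul_le_smul_add_smul [IsOrderedRing 𝕜] (he : 0 ≤ e) (hx : 0 ≤ x) (hxb : x ≤ b • e)
    (c : 𝕜) : min a (a + c * b) • e ≤ a • e + c • x := by
  rcases le_total 0 c with hc | hc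
  · exact (smul_le_smul_of_nonneg_right (min_le_left _ _) he).trans
      (le_add_of_nonneg_right (smul_nonneg hc hx))
  · refine (smul_le_smul_of_nonneg_right (min_le_right _ _) he).trans ?_
    rw [add_smul, mul_smul]
    exact add_le_add_right (smul_le_smul_of_nonpos_left hxb hc) _

lemma smul_add_smul_le_max_smul (he : 0 ≤ e) (hx : 0 ≤ x) (hxb : x ≤ b • e) (c : 𝕜) :
    a • e + c • x ≤ max a (a + c * b) • e := by
  rcases le_total 0 c with hc | hc
  · refine le_trans ?_ (smul_le_smul_of_nonneg_right (le_max_right _ _) he)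
    rw [add_smul, mul_smul]
    exact add_le_add_right (smul_le_smul_of_nonneg_left hxb hc) _
  · exact (add_le_of_nonpos_right (smul_nonpos_of_nonpos_of_nonneg hc hx)).trans
      (smul_le_smul_of_nonneg_right (le_max_left _ _) he)

end OrderedModule

section LoewnerOrder

open scoped MatrixOrder

variable {n : Type*} [DecidableEq n] {A : Matrix n n ℝ} {a b : ℝ}

lemma isHermitian_of_smul_one_le (h : a • 1 ≤ A) : A.IsHermitian := by
  simpa using h.1.add (isHermitian_one.smul (IsSelfAdjoint.all a))

variable [Fintype n]

lemma le_trace_smul_one (hA : A.PosSemidef) : A ≤ A.trace • 1 := by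
  rw [← Algebra.algebraMap_eq_smul_one, le_algebraMap_iff_spectrum_le hA.1,
    hA.1.spectrum_real_eq_range_eigenvalues, hA.1.trace_eq_sum_eigenvalues]
  rintro _ ⟨i, rfl⟩
  exact Finset.single_le_sum (fun i _ => hA.eigenvalues_nonneg i) (Finset.mem_univ i)

lemma le_of_mem_spectrum (h : a • 1 ≤ A) : ∀ x ∈ spectrum ℝ A, a ≤ x := by
  rwa [← algebraMap_le_iff_le_spectrum (isHermitian_of_smul_one_le h),
    Algebra.algebraMap_eq_smul_one]

lemma pow_card_le_det (ha : 0 ≤ a) (h : a • 1 ≤ A) : a ^ Fintype.card n ≤ A.det := by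
  have hA := isHermitian_of_smul_one_le h
  rw [hA.det_eq_prod_eigenvalues, ← Finset.card_univ, ← Finset.prod_const]
  exact Finset.prod_le_prod (fun _ _ => ha) fun i _ =>
    le_of_mem_spectrum h _ (hA.eigenvalues_mem_spectrum_real i)

lemma inv_smul_one_le_inv (ha : 0 < a) (haA : a • 1 ≤ A) (hAb : A ≤ b • 1) :
    b⁻¹ • 1 ≤ A⁻¹ := by
  have hA := isHermitian_of_smul_one_le haA
  have hdet : IsUnit A.det := ((pow_pos ha _).trans_le (pow_card_le_det ha.le haA)).ne'.isUnit
  rw [← Algebra.algebraMap_eq_smul_one, algebraMap_le_iff_le_spectrum hA.inv]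
  rw [← Algebra.algebraMap_eq_smul_one, le_algebraMap_iff_spectrum_le hA] at hAb
  intro x hx
  have hx' : x⁻¹ ∈ spectrum ℝ A :=
    (spectrum.inv₀_mem_iff (a := A.nonsingInvUnit hdet)).2 hx
  have hpos := ha.trans_le (le_of_mem_spectrum haA _ hx')
  exact inv_le_of_inv_le₀ (inv_pos.1 hpos) (hAb _ hx')

lemma smul_dotProduct_self_le {y : n → ℝ} (h : a • 1 ≤ A) : a * (y ⬝ᵥ y) ≤ y ⬝ᵥ (A *ᵥ y) := by
  have := h.dotProduct_mulVec_nonneg y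
  simp only [star_trivial, sub_mulVec, smul_mulVec, one_mulVec, dotProduct_sub, dotProduct_smul,
    smul_eq_mul] at this
  linarith

lemma inv_sqrt_det_mul_exp_le (ha : 0 < a) (haA : a • 1 ≤ A) (hAb : A ≤ b • 1) (x : n → ℝ) :
    (√((2 * π) • A).det)⁻¹ * exp (-(1 / 2) * (x ⬝ᵥ (A⁻¹ *ᵥ x))) ≤
      (√((2 * π * a) ^ Fintype.card n))⁻¹ * exp (-((x ⬝ᵥ x) / (2 * b))) := by
  have hscaled : (2 * π * a) • 1 ≤ (2 * π) • A := by
    rw [mul_smul]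
    exact smul_le_smul_of_nonneg_left haA (by positivity)
  have hdet := pow_card_le_det (by positivity) hscaled
  have hquad := smul_dotProduct_self_le (y := x) (inv_smul_one_le_inv ha haA hAb)
  gcongr
  have hhalf : x ⬝ᵥ x / (2 * b) = b⁻¹ * (x ⬝ᵥ x) / 2 := by ring
  rw [hhalf]
  linarith

lemma posSemidef_integral_mul {α ι : Type*} [Finite ι] [MeasurableSpace α] {μ : Measure α}
    {f : α → ι → ℝ} {g : α → ℝ} (hg : ∀ v, 0 ≤ g v)
    (hint : ∀ i j, Integrable (fun v => f v i * f v j * g v) μ) :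
    (Matrix.of fun i j => ∫ v, f v i * f v j * g v ∂μ).PosSemidef := by
  cases nonempty_fintype ι
  refine .of_dotProduct_mulVec_nonneg ?_ fun y => ?_
  · ext i j
    simp only [conjTranspose_apply, Matrix.of_apply, star_trivial, mul_comm (f _ i)]
  have hquad : star y ⬝ᵥ ((Matrix.of fun i j => ∫ v, f v i * f v j * g v ∂μ) *ᵥ y) =
      ∫ v, (f v ⬝ᵥ y) ^ 2 * g v ∂μ := by
    have hexpand (v : α) : (f v ⬝ᵥ y) ^ 2 * g v =
        ∑ i, ∑ j, y i * y j * (f v i * f v j * g v) := by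
      rw [sq, dotProduct, Finset.sum_mul_sum, Finset.sum_mul]
      refine Finset.sum_congr rfl fun i _ => ?_
      rw [Finset.sum_mul]
      exact Finset.sum_congr rfl fun j _ => by ring
    simp_rw [hexpand]
    rw [integral_finsetSum _ fun i _ => integrable_finsetSum _ fun j _ =>
      (hint i j).const_mul (y i * y j)]
    simp_rw [integral_finsetSum _ fun j _ => (hint _ j).const_mul (y _ * y j), integral_const_mul,
      dotProduct, mulVec, Matrix.of_apply, star_trivial, dotProduct, Finset.mul_sum]
    exact Finset.sum_congr rfl fun i _ => Finset.sum_congr rfl fun j _ => by ring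
  rw [hquad]
  exact integral_nonneg fun v => mul_nonneg (sq_nonneg _) (hg v)

end LoewnerOrder

section Moments

lemma integral_le_of_le_on_closedBall {X : Type*} [PseudoMetricSpace X] [MeasurableSpace X]
    [OpensMeasurableSpace X] {μ : Measure X} {g : X → ℝ} {u : X} {R S : ℝ} (hR : 0 < R)
    (hμ : μ (Metric.closedBall u R) ≠ ∞) (hg : ∀ v, 0 ≤ g v) (h0 : Integrable g μ)
    (h2 : Integrable (fun v => dist v u ^ 2 * g v) μ)
    (hS : ∀ v ∈ Metric.closedBall u R, g v ≤ S) :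
    ∫ v, g v ∂μ ≤ μ.real (Metric.closedBall u R) * S + (∫ v, dist v u ^ 2 * g v ∂μ) / R ^ 2 := by
  have hball : MeasurableSet (Metric.closedBall u R) := Metric.isClosed_closedBall.measurableSet
  rw [← integral_add_compl hball h0]
  gcongr ?_ + ?_
  · rw [← smul_eq_mul, ← setIntegral_const]
    exact setIntegral_mono_on h0.integrableOn (integrableOn_const hμ) hball hS
  · rw [le_div_iff₀ (by positivity), ← integral_mul_const]
    calc ∫ v in (Metric.closedBall u R)ᶜ, g v * R ^ 2 ∂μ
        ≤ ∫ v in (Metric.closedBall u R)ᶜ, dist v u ^ 2 * g v ∂μ := by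
          refine setIntegral_mono_on (h0.mul_const _).integrableOn h2.integrableOn hball.compl
            fun v hv => ?_
          rw [Set.mem_compl_iff, Metric.mem_closedBall, not_le] at hv
          rw [mul_comm]
          gcongr
          exact hg v
      _ ≤ ∫ v, dist v u ^ 2 * g v ∂μ :=
          setIntegral_le_integral h2 (.of_forall fun v => mul_nonneg (sq_nonneg _) (hg v))

variable {E : Type*} [NormedAddCommGroup E] [MeasurableSpace E] [BorelSpace E] {μ : Measure E}
  {g : E → ℝ}

lemma integrable_norm_sub_sq_mul (h0 : Integrable g μ)
    (h2 : Integrable (fun v => ‖v‖ ^ 2 * g v) μ) (u : E) :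
    Integrable (fun v => ‖v - u‖ ^ 2 * g v) μ := by
  refine ((h2.norm.const_mul 2).add (h0.norm.const_mul (2 * ‖u‖ ^ 2))).mono'
    (Continuous.aestronglyMeasurable (by fun_prop) |>.mul h0.aestronglyMeasurable)
    (.of_forall fun v => ?_)
  have hsq : ‖v - u‖ ^ 2 ≤ 2 * ‖v‖ ^ 2 + 2 * ‖u‖ ^ 2 := by
    nlinarith [norm_sub_le v u, norm_nonneg (v - u), sq_nonneg (‖v‖ - ‖u‖)]
  simp only [Pi.add_apply, norm_mul, norm_pow, norm_norm]
  linarith [mul_le_mul_of_nonneg_right hsq (norm_nonneg (g v))]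

lemma integrable_smul_self [NormedSpace ℝ E] [SecondCountableTopology E] (h0 : Integrable g μ)
    (h2 : Integrable (fun v => ‖v‖ ^ 2 * g v) μ) : Integrable (fun v => g v • v) μ := by
  refine (h0.norm.add h2.norm).mono' (h0.aestronglyMeasurable.smul aestronglyMeasurable_id)
    (.of_forall fun v => ?_)
  have hsq : ‖v‖ ≤ 1 + ‖v‖ ^ 2 := by nlinarith [sq_nonneg (‖v‖ - 1)]
  simp only [Pi.add_apply, norm_smul, norm_mul, norm_pow, norm_norm]
  linarith [mul_le_mul_of_nonneg_left hsq (norm_nonneg (g v))]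

lemma integral_norm_sub_mean_sq_mul {E : Type*} [NormedAddCommGroup E] [InnerProductSpace ℝ E]
    [CompleteSpace E] [SecondCountableTopology E] [MeasurableSpace E] [BorelSpace E]
    {μ : Measure E} {g : E → ℝ} {u : E} (h0 : Integrable g μ)
    (h2 : Integrable (fun v => ‖v‖ ^ 2 * g v) μ)
    (hu : ∫ v, g v • v ∂μ = (∫ v, g v ∂μ) • u) :
    ∫ v, ‖v - u‖ ^ 2 * g v ∂μ = (∫ v, ‖v‖ ^ 2 * g v ∂μ) - (∫ v, g v ∂μ) * ‖u‖ ^ 2 := by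
  have h1 := integrable_smul_self h0 h2
  have hcross := (h1.const_inner (𝕜 := ℝ) u).const_mul 2
  have hdiff : Integrable (fun v => ‖v‖ ^ 2 * g v - 2 * inner ℝ u (g v • v)) μ := h2.sub hcross
  have hexpand (v : E) : ‖v - u‖ ^ 2 * g v =
      ‖v‖ ^ 2 * g v - 2 * inner ℝ u (g v • v) + g v * ‖u‖ ^ 2 := by
    rw [norm_sub_sq_real, inner_smul_right, real_inner_comm]
    ring
  simp_rw [hexpand]
  rw [integral_add hdiff (h0.mul_const _), integral_sub h2 hcross, integral_const_mul,
    integral_mul_const, integral_inner h1, hu, inner_smul_right, real_inner_self_eq_norm_sq]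
  ring

-- With the rescaled weight `1 + ‖r⁻¹ • v‖` the tail integral depends on `r` by dilation only.
lemma norm_sq_mul_le_of_rpow_mul_le {E : Type*} [SeminormedAddCommGroup E] [NormedSpace ℝ E]
    {g : E → ℝ} {β N r : ℝ} {v : E} (hβ : 2 ≤ β) (hr : 0 < r) (hg : 0 ≤ g v)
    (hN : (1 + ‖v‖) ^ β * g v ≤ N) :
    ‖v‖ ^ 2 * g v ≤ r ^ 2 * g v + N * (2 / r) ^ (β - 2) * (1 + ‖r⁻¹ • v‖) ^ (2 - β) := by
  have hN0 : 0 ≤ N := (mul_nonneg (by positivity) hg).trans hN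
  rcases le_total ‖v‖ r with hvr | hrv
  · exact le_add_of_le_of_nonneg (by gcongr) (by positivity)
  · have hv : 0 < ‖v‖ := hr.trans_le hrv
    have hscale : (r / 2) * (1 + ‖r⁻¹ • v‖) ≤ ‖v‖ := by
      rw [norm_smul, norm_inv, norm_of_nonneg hr.le]
      field_simp
      linarith
    refine le_add_of_nonneg_of_le (by positivity) ?_
    calc ‖v‖ ^ 2 * g v ≤ ‖v‖ ^ 2 * (N * ‖v‖ ^ (-β)) := by
          gcongr
          exact le_mul_rpow_neg_of_rpow_mul_le hv (by linarith) (by linarith) hg hN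
      _ = N * ‖v‖ ^ (2 - β) := by
          rw [mul_left_comm, sq_mul_rpow_neg hv]
      _ ≤ N * (r / 2 * (1 + ‖r⁻¹ • v‖)) ^ (2 - β) := by
          gcongr ?_ * ?_
          exact rpow_le_rpow_of_nonpos (by positivity) hscale (by linarith)
      _ = N * (2 / r) ^ (β - 2) * (1 + ‖r⁻¹ • v‖) ^ (2 - β) := by
          rw [mul_rpow (by positivity) (by positivity), ← neg_sub β 2, rpow_neg (by positivity),
            ← inv_rpow (by positivity), inv_div, mul_assoc]

variable [NormedSpace ℝ E] [FiniteDimensional ℝ E] [μ.IsAddHaarMeasure] {β N : ℝ}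

lemma integrable_one_add_norm_rpow_two_sub (hβ : Module.finrank ℝ E + 2 < β) :
    Integrable (fun v : E => (1 + ‖v‖) ^ (2 - β)) μ := by
  simpa only [neg_sub] using integrable_one_add_norm (E := E) (μ := μ) (r := β - 2) (by linarith)

lemma integral_norm_sq_mul_le (hβ : Module.finrank ℝ E + 2 < β) (hg : ∀ v, 0 ≤ g v)
    (h2 : Integrable (fun v => ‖v‖ ^ 2 * g v) μ) (hN : ∀ v, (1 + ‖v‖) ^ β * g v ≤ N) :
    ∫ v, ‖v‖ ^ 2 * g v ∂μ ≤ N * ∫ v, (1 + ‖v‖) ^ (2 - β) ∂μ := by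
  rw [← integral_const_mul]
  refine integral_mono h2 ((integrable_one_add_norm_rpow_two_sub hβ).const_mul _) fun v => ?_
  have hβ0 : 0 ≤ β := by linarith [(Nat.cast_nonneg (Module.finrank ℝ E) : (0 : ℝ) ≤ _)]
  calc ‖v‖ ^ 2 * g v ≤ (1 + ‖v‖) ^ 2 * (N * (1 + ‖v‖) ^ (-β)) := by
        gcongr
        · exact hg v
        · linarith
        · exact le_mul_rpow_neg_of_rpow_mul_le (by positivity) le_rfl hβ0 (hg v) (hN v)
    _ = N * (1 + ‖v‖) ^ (2 - β) := by
        rw [mul_left_comm, sq_mul_rpow_neg (by positivity)]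

lemma integral_norm_sq_mul_le_add (hβ : Module.finrank ℝ E + 2 < β) (hg : ∀ v, 0 ≤ g v)
    (h0 : Integrable g μ) (h2 : Integrable (fun v => ‖v‖ ^ 2 * g v) μ)
    (hN : ∀ v, (1 + ‖v‖) ^ β * g v ≤ N) {r : ℝ} (hr : 0 < r) :
    ∫ v, ‖v‖ ^ 2 * g v ∂μ ≤ r ^ 2 * (∫ v, g v ∂μ) +
      N * (2 / r) ^ (β - 2) * (r ^ Module.finrank ℝ E * ∫ v, (1 + ‖v‖) ^ (2 - β) ∂μ) := by
  have hβ2 : 2 ≤ β := by linarith [(Nat.cast_nonneg (Module.finrank ℝ E) : (0 : ℝ) ≤ _)]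
  have hscaled : Integrable (fun v : E => (1 + ‖r⁻¹ • v‖) ^ (2 - β)) μ :=
    (integrable_one_add_norm_rpow_two_sub hβ).comp_smul (inv_ne_zero hr.ne')
  have hscale : ∫ v, (1 + ‖r⁻¹ • v‖) ^ (2 - β) ∂μ =
      r ^ Module.finrank ℝ E * ∫ v, (1 + ‖v‖) ^ (2 - β) ∂μ := by
    rw [Measure.integral_comp_inv_smul_of_nonneg μ (fun v : E => (1 + ‖v‖) ^ (2 - β)) hr.le,
      smul_eq_mul]
  rw [← hscale, ← integral_const_mul, ← integral_const_mul,
    ← integral_add (h0.const_mul _) (hscaled.const_mul _)]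
  exact integral_mono h2 ((h0.const_mul _).add (hscaled.const_mul _)) fun v =>
    norm_sq_mul_le_of_rpow_mul_le hβ2 hr (hg v) (hN v)

end Moments

section VelocityDistributions

open scoped MatrixOrder

/-- A velocity profile with finite mass and energy, as are the slices `F(t, x, ·)` of a mild
solution. Positivity of the density and of the temperature keeps `bulk`, `temp`, `stress` and the
inverse of `tempTensor` away from the convention `0⁻¹ = 0`. -/
structure IsVelocityDistribution (g : E3 → ℝ) : Prop where
  nonneg : ∀ v, 0 ≤ g v
  integrable : Integrable g
  moment2 : Integrable fun v => ‖v‖ ^ 2 * g v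
  dens_pos : 0 < dens g
  temp_pos : 0 < temp g

variable {g : E3 → ℝ} {ν β N : ℝ}

lemma three_mul_dens_mul_temp (hρ : dens g ≠ 0) :
    3 * dens g * temp g = ∫ v, ‖v - bulk g‖ ^ 2 * g v := by
  rw [temp, mul_inv_cancel_left₀ (mul_ne_zero three_ne_zero hρ)]

lemma aGauss_nonneg (hρ : 0 ≤ dens g) (ν : ℝ) (v : E3) : 0 ≤ aGauss g ν v := by
  unfold aGauss
  positivity

lemma aGauss_le_of_smul_one_le {a b : ℝ} (hρ : 0 ≤ dens g) (ha : 0 < a)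
    (hlower : a • 1 ≤ tempTensor g ν) (hupper : tempTensor g ν ≤ b • 1) (v : E3) :
    aGauss g ν v ≤
      dens g / √((2 * π * a) ^ 3) * exp (-(‖v - bulk g‖ ^ 2 / (2 * b))) := by
  have hnorm : (fun i => (v - bulk g) i) ⬝ᵥ (fun i => (v - bulk g) i) = ‖v - bulk g‖ ^ 2 := by
    rw [EuclideanSpace.real_norm_sq_eq]
    exact Finset.sum_congr rfl fun i _ => (sq _).symm
  have hgauss := inv_sqrt_det_mul_exp_le ha hlower hupper fun i => (v - bulk g) i
  rw [hnorm, Fintype.card_fin] at hgauss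
  simp only [aGauss, div_eq_mul_inv (dens g), mul_assoc (dens g)]
  exact mul_le_mul_of_nonneg_left hgauss hρ

namespace IsVelocityDistribution

lemma bound_nonneg (hg : IsVelocityDistribution g) (hN : ∀ v, (1 + ‖v‖) ^ β * g v ≤ N) : 0 ≤ N :=
  (mul_nonneg (by positivity) (hg.nonneg 0)).trans (hN 0)

lemma collFreq_nonneg (hg : IsVelocityDistribution g) (hν : ν ≤ 1) : 0 ≤ collFreq g ν :=
  div_nonneg (mul_nonneg hg.dens_pos.le hg.temp_pos.le) (sub_nonneg.2 hν)

lemma three_mul_dens_mul_temp_le (hg : IsVelocityDistribution g) :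
    3 * dens g * temp g ≤ ∫ v, ‖v‖ ^ 2 * g v := by
  have hmean : ∫ v, g v • v = (∫ v, g v) • bulk g := (smul_inv_smul₀ hg.dens_pos.ne' _).symm
  rw [three_mul_dens_mul_temp hg.dens_pos.ne',
    integral_norm_sub_mean_sq_mul hg.integrable hg.moment2 hmean]
  exact sub_le_self _ (mul_nonneg hg.dens_pos.le (sq_nonneg _))

lemma collFreq_le (hg : IsVelocityDistribution g) (hν : ν < 1) (hβ : 5 < β)
    (hN : ∀ v, (1 + ‖v‖) ^ β * g v ≤ N) :
    collFreq g ν ≤ (∫ v : E3, (1 + ‖v‖) ^ (2 - β)) / (3 * (1 - ν)) * N := by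
  have hmoment := integral_norm_sq_mul_le (by norm_num; linarith) hg.nonneg hg.moment2 hN
  have hν' : 0 < 1 - ν := sub_pos.2 hν
  rw [collFreq, div_mul_eq_mul_div, mul_comm _ N, div_le_div_iff₀ hν' (by positivity)]
  nlinarith [hg.three_mul_dens_mul_temp_le.trans hmoment]

lemma dens_mul_sqrt_temp_rpow_le (hg : IsVelocityDistribution g) (hβ : 5 < β)
    (hN : ∀ v, (1 + ‖v‖) ^ β * g v ≤ N) :
    dens g * √(temp g) ^ β ≤
      2 ^ (β - 3) * (∫ v : E3, (1 + ‖v‖) ^ (2 - β)) * (N * √(temp g) ^ 3) := by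
  have hσ : 0 < √(temp g) := sqrt_pos.2 hg.temp_pos
  have hmoment := hg.three_mul_dens_mul_temp_le.trans <| integral_norm_sq_mul_le_add
    (by norm_num; linarith) hg.nonneg hg.integrable hg.moment2 hN hσ
  rw [finrank_euclideanSpace_fin, ← dens] at hmoment
  nth_rw 1 [← sq_sqrt hg.temp_pos.le] at hmoment
  set σ := √(temp g)
  set K := ∫ v : E3, (1 + ‖v‖) ^ (2 - β)
  have hβσ : σ ^ β = σ ^ (β - 2) * σ ^ 2 := by
    rw [← Real.rpow_two, ← Real.rpow_add hσ, sub_add_cancel]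
  have hcancel : (2 / σ) ^ (β - 2) * σ ^ (β - 2) = 2 * 2 ^ (β - 3) := by
    rw [← mul_rpow (by positivity) hσ.le, div_mul_cancel₀ _ hσ.ne', ← rpow_one_add' (by positivity)]
    · congr 1
      ring
    · linarith
  have htail : dens g * σ ^ 2 ≤ N * (2 / σ) ^ (β - 2) * (σ ^ 3 * K) / 2 := by linarith
  calc dens g * σ ^ β = dens g * σ ^ 2 * σ ^ (β - 2) := by rw [hβσ]; ring
    _ ≤ N * (2 / σ) ^ (β - 2) * (σ ^ 3 * K) / 2 * σ ^ (β - 2) := by gcongr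
    _ = (2 / σ) ^ (β - 2) * σ ^ (β - 2) / 2 * K * (N * σ ^ 3) := by ring
    _ = 2 ^ (β - 3) * K * (N * σ ^ 3) := by rw [hcancel]; ring

lemma dens_le_of_le_on_closedBall (hg : IsVelocityDistribution g) {S : ℝ}
    (hS : ∀ v ∈ Metric.closedBall (bulk g) (3 * √(temp g)), g v ≤ S) :
    dens g ≤ 81 / 2 * volume.real (Metric.closedBall (0 : E3) 1) * (S * √(temp g) ^ 3) := by
  have hσ : 0 < √(temp g) := sqrt_pos.2 hg.temp_pos
  have hvar := three_mul_dens_mul_temp hg.dens_pos.ne'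
  have hcheb := integral_le_of_le_on_closedBall (by positivity) measure_closedBall_lt_top.ne
    hg.nonneg hg.integrable (by
      simpa only [dist_eq_norm] using integrable_norm_sub_sq_mul hg.integrable hg.moment2 (bulk g))
    hS
  simp only [dist_eq_norm] at hcheb
  have hthird : 3 * dens g * temp g / (3 * √(temp g)) ^ 2 = dens g / 3 := by
    rw [mul_pow, sq_sqrt hg.temp_pos.le]
    field_simp [hg.temp_pos.ne']
  rw [Measure.addHaar_real_closedBall' _ _ (by positivity), finrank_euclideanSpace_fin, ← hvar,
    hthird, ← dens] at hcheb
  linarith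

lemma dens_mul_bulk_rpow_le_of_sqrt_temp_le (hg : IsVelocityDistribution g) (hβ : 0 ≤ β)
    (hN : ∀ v, (1 + ‖v‖) ^ β * g v ≤ N) (hcold : 6 * √(temp g) ≤ 1 + ‖bulk g‖) :
    dens g * (1 + ‖bulk g‖) ^ β ≤
      81 / 2 * volume.real (Metric.closedBall (0 : E3) 1) * 2 ^ β * (N * √(temp g) ^ 3) := by
  set U := 1 + ‖bulk g‖
  have hU : 0 < U := by positivity
  have hball : ∀ v ∈ Metric.closedBall (bulk g) (3 * √(temp g)), g v ≤ N * (U / 2) ^ (-β) := by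
    intro v hv
    rw [mem_closedBall_iff_norm'] at hv
    have hfar : U / 2 ≤ 1 + ‖v‖ := by linarith [norm_sub_norm_le (bulk g) v]
    exact le_mul_rpow_neg_of_rpow_mul_le (half_pos hU) hfar hβ (hg.nonneg v) (hN v)
  have hcancel : (U / 2) ^ (-β) * U ^ β = 2 ^ β := by
    rw [rpow_neg (by positivity), div_rpow hU.le zero_le_two]
    field_simp
  calc dens g * U ^ β
      ≤ 81 / 2 * volume.real (Metric.closedBall (0 : E3) 1) *
          (N * (U / 2) ^ (-β) * √(temp g) ^ 3) * U ^ β := by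
        gcongr
        exact hg.dens_le_of_le_on_closedBall hball
    _ = 81 / 2 * volume.real (Metric.closedBall (0 : E3) 1) * ((U / 2) ^ (-β) * U ^ β) *
          (N * √(temp g) ^ 3) := by ring
    _ = _ := by rw [hcancel]

lemma dens_mul_bulk_rpow_le_of_le_sqrt_temp (hg : IsVelocityDistribution g) (hβ : 5 < β)
    (hN : ∀ v, (1 + ‖v‖) ^ β * g v ≤ N) (hhot : 1 + ‖bulk g‖ ≤ 6 * √(temp g)) :
    dens g * (1 + ‖bulk g‖) ^ β ≤
      6 ^ β * (2 ^ (β - 3) * ∫ v : E3, (1 + ‖v‖) ^ (2 - β)) * (N * √(temp g) ^ 3) := by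
  have hρ := hg.dens_pos.le
  calc dens g * (1 + ‖bulk g‖) ^ β ≤ dens g * (6 * √(temp g)) ^ β := by gcongr
    _ = 6 ^ β * (dens g * √(temp g) ^ β) := by
        rw [mul_rpow (by positivity) (by positivity), mul_left_comm]
    _ ≤ 6 ^ β * (2 ^ (β - 3) * (∫ v : E3, (1 + ‖v‖) ^ (2 - β)) * (N * √(temp g) ^ 3)) := by
        gcongr ?_ * ?_
        exact hg.dens_mul_sqrt_temp_rpow_le hβ hN
    _ = _ := (mul_assoc _ _ _).symm

lemma integrable_sub_mul_sub_mul (hg : IsVelocityDistribution g) (u : E3) (i j : Fin 3) :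
    Integrable fun v => (v - u) i * (v - u) j * g v := by
  refine (integrable_norm_sub_sq_mul hg.integrable hg.moment2 u).mono'
    (Continuous.aestronglyMeasurable (by fun_prop) |>.mul hg.integrable.aestronglyMeasurable)
    (.of_forall fun v => ?_)
  rw [norm_mul, norm_mul, norm_of_nonneg (hg.nonneg v), sq]
  gcongr
  exacts [hg.nonneg v, PiLp.norm_apply_le _ _, PiLp.norm_apply_le _ _]

lemma posSemidef_stress (hg : IsVelocityDistribution g) : (stress g).PosSemidef :=
  (posSemidef_integral_mul (f := fun v i => (v - bulk g) i) hg.nonneg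
    (hg.integrable_sub_mul_sub_mul _)).smul (inv_nonneg.2 hg.dens_pos.le)

lemma trace_stress (hg : IsVelocityDistribution g) : (stress g).trace = 3 * temp g := by
  have hsum : ∑ i, ∫ v, (v - bulk g) i * (v - bulk g) i * g v =
      ∫ v, ‖v - bulk g‖ ^ 2 * g v := by
    rw [← integral_finsetSum _ fun i _ => hg.integrable_sub_mul_sub_mul _ i i]
    simp_rw [EuclideanSpace.real_norm_sq_eq, Finset.sum_mul, sq]
  simp only [trace, diag_apply, stress, Matrix.of_apply, ← Finset.mul_sum]
  rw [hsum, ← three_mul_dens_mul_temp hg.dens_pos.ne', inv_mul_eq_iff_eq_mul₀ hg.dens_pos.ne']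
  ring

lemma stress_le_smul_one (hg : IsVelocityDistribution g) : stress g ≤ (3 * temp g) • 1 :=
  hg.trace_stress ▸ le_trace_smul_one hg.posSemidef_stress

lemma smul_one_le_tempTensor (hg : IsVelocityDistribution g) (ν : ℝ) :
    (min (1 - ν) (1 + 2 * ν) * temp g) • 1 ≤ tempTensor g ν := by
  have hmix : (1 - ν) * temp g + ν * (3 * temp g) = (1 + 2 * ν) * temp g := by ring
  rw [min_mul_of_nonneg _ _ hg.temp_pos.le, ← hmix]
  exact min_smul_le_smul_add_smul PosSemidef.one.nonneg hg.posSemidef_stress.nonneg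
    hg.stress_le_smul_one ν

lemma tempTensor_le_smul_one (hg : IsVelocityDistribution g) (ν : ℝ) :
    tempTensor g ν ≤ (max (1 - ν) (1 + 2 * ν) * temp g) • 1 := by
  have hmix : (1 - ν) * temp g + ν * (3 * temp g) = (1 + 2 * ν) * temp g := by ring
  rw [max_mul_of_nonneg _ _ hg.temp_pos.le, ← hmix]
  exact smul_add_smul_le_max_smul PosSemidef.one.nonneg hg.posSemidef_stress.nonneg
    hg.stress_le_smul_one ν

end IsVelocityDistribution

end VelocityDistributions

section GainTerm

variable {ν β : ℝ}

lemma exists_dens_mul_bulk_rpow_le (hβ : 5 < β) :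
    ∃ C ≥ 0, ∀ (g : E3 → ℝ) (N : ℝ), IsVelocityDistribution g →
      (∀ v, (1 + ‖v‖) ^ β * g v ≤ N) →
      dens g * (1 + ‖bulk g‖) ^ β ≤ C * (N * √(temp g) ^ 3) := by
  refine ⟨max (81 / 2 * volume.real (Metric.closedBall (0 : E3) 1) * 2 ^ β)
    (6 ^ β * (2 ^ (β - 3) * ∫ v : E3, (1 + ‖v‖) ^ (2 - β))),
    le_max_of_le_left (by positivity), fun g N hg hN => ?_⟩
  have hN0 : 0 ≤ N * √(temp g) ^ 3 := mul_nonneg (hg.bound_nonneg hN) (by positivity)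
  rcases le_total (6 * √(temp g)) (1 + ‖bulk g‖) with hcold | hhot
  · exact (hg.dens_mul_bulk_rpow_le_of_sqrt_temp_le (by linarith) hN hcold).trans
      (mul_le_mul_of_nonneg_right (le_max_left _ _) hN0)
  · exact (hg.dens_mul_bulk_rpow_le_of_le_sqrt_temp hβ hN hhot).trans
      (mul_le_mul_of_nonneg_right (le_max_right _ _) hN0)

lemma exists_rpow_mul_gaussian_le (hβ : 5 < β) {b : ℝ} (hb : 0 < b) :
    ∃ C ≥ 0, ∀ (g : E3 → ℝ) (N : ℝ), IsVelocityDistribution g →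
      (∀ v, (1 + ‖v‖) ^ β * g v ≤ N) → ∀ v,
      (1 + ‖v‖) ^ β * (dens g * exp (-(‖v - bulk g‖ ^ 2 / (2 * (b * temp g))))) ≤
        C * (N * √(temp g) ^ 3) := by
  obtain ⟨C, hC, hbulk⟩ := exists_dens_mul_bulk_rpow_le hβ
  have hβ1 : 1 ≤ β := by linarith
  set K := 2 ^ (β - 3) * ∫ v : E3, (1 + ‖v‖) ^ (2 - β)
  refine ⟨2 ^ (β - 1) * (C + (β * b) ^ (β / 2) * K), by positivity, fun g N hg hN v => ?_⟩
  have hthermal : (β * (b * temp g)) ^ (β / 2) = (β * b) ^ (β / 2) * √(temp g) ^ β := by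
    rw [← mul_assoc, mul_rpow (by positivity) hg.temp_pos.le,
      rpow_div_two_eq_sqrt _ hg.temp_pos.le]
  have hρ := hg.dens_pos.le
  calc (1 + ‖v‖) ^ β * (dens g * exp (-(‖v - bulk g‖ ^ 2 / (2 * (b * temp g)))))
      = dens g * ((1 + ‖v‖) ^ β * exp (-(‖v - bulk g‖ ^ 2 / (2 * (b * temp g))))) := by ring
    _ ≤ dens g * (2 ^ (β - 1) * ((1 + ‖bulk g‖) ^ β + (β * (b * temp g)) ^ (β / 2))) := by
        gcongr ?_ * ?_
        exact one_add_norm_rpow_mul_exp_le hβ1 (mul_pos hb hg.temp_pos) (bulk g) v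
    _ = 2 ^ (β - 1) * (dens g * (1 + ‖bulk g‖) ^ β +
          (β * b) ^ (β / 2) * (dens g * √(temp g) ^ β)) := by rw [hthermal]; ring
    _ ≤ 2 ^ (β - 1) * (C * (N * √(temp g) ^ 3) +
          (β * b) ^ (β / 2) * (K * (N * √(temp g) ^ 3))) := by
        gcongr ?_ * (?_ + ?_ * ?_)
        exacts [hbulk g N hg hN, hg.dens_mul_sqrt_temp_rpow_le hβ hN]
    _ = 2 ^ (β - 1) * (C + (β * b) ^ (β / 2) * K) * (N * √(temp g) ^ 3) := by ring

lemma exists_rpow_mul_aGauss_le (hν1 : -(1 / 2) < ν) (hν2 : ν < 1) (hβ : 5 < β) :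
    ∃ C ≥ 0, ∀ (g : E3 → ℝ) (N : ℝ), IsVelocityDistribution g →
      (∀ v, (1 + ‖v‖) ^ β * g v ≤ N) → ∀ v, (1 + ‖v‖) ^ β * aGauss g ν v ≤ C * N := by
  set a := min (1 - ν) (1 + 2 * ν)
  set b := max (1 - ν) (1 + 2 * ν)
  have ha : 0 < a := lt_min (by linarith) (by linarith)
  have hb : 0 < b := lt_max_of_lt_left (by linarith)
  obtain ⟨C, hC, hgauss⟩ := exists_rpow_mul_gaussian_le hβ hb
  refine ⟨C / √((2 * π * a) ^ 3), by positivity, fun g N hg hN v => ?_⟩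
  have hσ : 0 < √(temp g) := sqrt_pos.2 hg.temp_pos
  have hroot : √((2 * π * (a * temp g)) ^ 3) = √((2 * π * a) ^ 3) * √(temp g) ^ 3 := by
    have hpow : (2 * π * (a * temp g)) ^ 3 = (2 * π * a) ^ 3 * (√(temp g) ^ 3) ^ 2 := by
      rw [pow_right_comm, sq_sqrt hg.temp_pos.le]
      ring
    rw [hpow, sqrt_mul (by positivity), sqrt_sq (by positivity)]
  have hbound := aGauss_le_of_smul_one_le hg.dens_pos.le (mul_pos ha hg.temp_pos)
    (hg.smul_one_le_tempTensor ν) (hg.tempTensor_le_smul_one ν) v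
  calc (1 + ‖v‖) ^ β * aGauss g ν v
      ≤ (1 + ‖v‖) ^ β * (dens g / √((2 * π * (a * temp g)) ^ 3) *
          exp (-(‖v - bulk g‖ ^ 2 / (2 * (b * temp g))))) := by gcongr
    _ = (1 + ‖v‖) ^ β * (dens g * exp (-(‖v - bulk g‖ ^ 2 / (2 * (b * temp g))))) /
          (√((2 * π * a) ^ 3) * √(temp g) ^ 3) := by rw [hroot]; ring
    _ ≤ C * (N * √(temp g) ^ 3) / (√((2 * π * a) ^ 3) * √(temp g) ^ 3) := by
        gcongr ?_ / _
        exact hgauss g N hg hN v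
    _ = C / √((2 * π * a) ^ 3) * N := by field_simp

lemma exists_rpow_mul_gain_le (hν1 : -(1 / 2) < ν) (hν2 : ν < 1) (hβ : 5 < β) :
    ∃ C > 0, ∀ (g : E3 → ℝ) (N : ℝ), IsVelocityDistribution g →
      (∀ v, (1 + ‖v‖) ^ β * g v ≤ N) → ∀ v,
      (1 + ‖v‖) ^ β * (collFreq g ν * aGauss g ν v) ≤ C * N ^ 2 := by
  obtain ⟨C, hC, hgauss⟩ := exists_rpow_mul_aGauss_le hν1 hν2 hβ
  set K := (∫ v : E3, (1 + ‖v‖) ^ (2 - β)) / (3 * (1 - ν))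
  have hK : 0 ≤ K := div_nonneg (integral_nonneg fun v => by positivity) (by linarith)
  refine ⟨K * C + 1, add_pos_of_nonneg_of_pos (mul_nonneg hK hC) one_pos, fun g N hg hN v => ?_⟩
  have hfreq := hg.collFreq_le hν2 hβ hN
  have hN0 := hg.bound_nonneg hN
  calc (1 + ‖v‖) ^ β * (collFreq g ν * aGauss g ν v)
      = collFreq g ν * ((1 + ‖v‖) ^ β * aGauss g ν v) := mul_left_comm _ _ _
    _ ≤ K * N * (C * N) :=
        mul_le_mul hfreq (hgauss g N hg hN v)
          (mul_nonneg (by positivity) (aGauss_nonneg hg.dens_pos.le ν v)) (mul_nonneg hK hN0)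
    _ ≤ (K * C + 1) * N ^ 2 := by nlinarith [sq_nonneg N]

end GainTerm

lemma rpow_mul_le_wSup {β : ℝ} {f : E3 → E3 → ℝ} (hf : WBdd β f) (x v : E3) :
    (1 + ‖v‖) ^ β * f x v ≤ wSup β f :=
  le_ciSup hf (x, v)

end ESBGK

namespace IsMildSolution

open ESBGK

variable {ν β : ℝ} {F₀ : E3 → E3 → ℝ} {F : ℝ → E3 → E3 → ℝ} {t : ℝ}

lemma apply_zero_eq (h : IsMildSolution ν β F₀ F) : F 0 = F₀ := by
  ext x v
  simpa using h.mild 0 le_rfl x v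

lemma isVelocityDistribution (h : IsMildSolution ν β F₀ F) (ht : 0 ≤ t) (x : E3) :
    IsVelocityDistribution (F t x) where
  nonneg := h.nonneg t ht x
  integrable := h.integrable t ht x
  moment2 := h.moment2 t ht x
  dens_pos := h.dens_pos t ht x
  temp_pos := h.temp_pos t ht x

lemma wSup_pos (h : IsMildSolution ν β F₀ F) (ht : 0 ≤ t) : 0 < wSup β (F t) := by
  obtain ⟨v, hv⟩ : ∃ v, F t 0 v ≠ 0 := by
    by_contra! hzero
    exact (h.dens_pos t ht 0).ne' (by simp only [dens, hzero, integral_zero])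
  have hpos : 0 < F t 0 v := (h.nonneg t ht 0 v).lt_of_ne' hv
  exact (by positivity : 0 < (1 + ‖v‖) ^ β * F t 0 v).trans_le
    (rpow_mul_le_wSup (h.wnorm_bdd t ht) 0 v)

lemma wSup_le_add_mul (h : IsMildSolution ν β F₀ F) (hν : ν ≤ 1) (ht : 0 ≤ t) {G : ℝ}
    (hG : ∀ s ∈ Set.Ico 0 t, ∀ x v,
      (1 + ‖v‖) ^ β * (collFreq (F s x) ν * aGauss (F s x) ν v) ≤ G) :
    wSup β (F t) ≤ wSup β F₀ + G * t := by
  refine ciSup_le fun ⟨x, v⟩ => ?_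
  have hw : 0 < (1 + ‖v‖) ^ β := by positivity
  have hF₀ : F 0 = F₀ := h.apply_zero_eq
  have hduhamel := duhamel_le (a := fun s => collFreq (F s (x - (t - s) • v)) ν)
    (m := fun s => aGauss (F s (x - (t - s) • v)) ν v) (f₀ := F₀ (x - t • v) v)
    (G := G / (1 + ‖v‖) ^ β) ht
    (fun s hs => (h.isVelocityDistribution hs.1 _).collFreq_nonneg hν)
    (hF₀ ▸ h.nonneg 0 le_rfl _ _)
    (fun s hs => aGauss_nonneg (h.dens_pos s hs.1 _).le ν v)
    (fun s hs => (le_div_iff₀' hw).2 (hG s hs _ v))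
  rw [← h.mild t ht x v, sub_zero] at hduhamel
  calc (1 + ‖v‖) ^ β * F t x v
      ≤ (1 + ‖v‖) ^ β * (F₀ (x - t • v) v + G / (1 + ‖v‖) ^ β * t) := by gcongr
    _ = (1 + ‖v‖) ^ β * F₀ (x - t • v) v + G * t := by field_simp
    _ ≤ wSup β F₀ + G * t := by
        gcongr
        exact rpow_mul_le_wSup (hF₀ ▸ h.wnorm_bdd 0 le_rfl) _ v

end IsMildSolution

/-- Lemma 3.1: local-in-time weighted `L^∞` estimate. -/
theorem local_Linfty_estimate
    (ν β : ℝ) (hν1 : -(1 / 2 : ℝ) < ν) (hν2 : ν < 1) (hβ : 5 < β) :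
    ∃ Cβν > (0 : ℝ), ∀ (F₀ : E3 → E3 → ℝ) (F : ℝ → E3 → E3 → ℝ),
      Measurable (fun p : E3 × E3 => F₀ p.1 p.2) →
      (∀ x v, 0 ≤ F₀ x v) →
      WBdd β F₀ →
      IsMildSolution ν β F₀ F →
      ∀ t ∈ Set.Icc (0 : ℝ) (4 * Cβν * wSup β F₀)⁻¹, wSup β (F t) ≤ 2 * wSup β F₀ := by
  obtain ⟨C, hC, hgain⟩ := ESBGK.exists_rpow_mul_gain_le hν1 hν2 hβ
  refine ⟨2 * C, by positivity, fun F₀ F _ _ _ h => ?_⟩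
  have hM0 : 0 < wSup β F₀ := h.apply_zero_eq ▸ h.wSup_pos le_rfl
  set M := wSup β F₀
  suffices hlt : ∀ t ∈ Set.Icc 0 (4 * (2 * C) * M)⁻¹, wSup β (F t) < 2 * M from
    fun t ht => (hlt t ht).le
  refine ESBGK.forall_Icc_lt_of_forall_Ico_lt (h.wnorm_cont.mono fun s hs => hs.1)
    fun t ht hbelow => ?_
  have hG : ∀ s ∈ Set.Ico 0 t, ∀ x v,
      (1 + ‖v‖) ^ β * (collFreq (F s x) ν * aGauss (F s x) ν v) ≤ C * (2 * M) ^ 2 :=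
    fun s hs x => hgain _ _ (h.isVelocityDistribution hs.1 x) fun v =>
      (ESBGK.rpow_mul_le_wSup (h.wnorm_bdd s hs.1) x v).trans (hbelow s hs).le
  calc wSup β (F t) ≤ M + C * (2 * M) ^ 2 * t := h.wSup_le_add_mul hν2.le ht.1 hG
    _ ≤ M + C * (2 * M) ^ 2 * (4 * (2 * C) * M)⁻¹ := by gcongr; exact ht.2
    _ = M + M / 2 := by field_simp; norm_num
    _ < 2 * M := by linarith
end

section
/- Let ν ∈ (−1/2,1) and β > 5. There exists a constant C_β(ν) > 0, depending only on β and ν, such that for every nonnegative measurable g : ℝ³ → ℝ with 0 < ρ < ∞, 0 < T < ∞ and finite second moment (so that M_ν is defined), one has sup_{v∈ℝ³}(1+|v|)^β M_ν(v) ≤ C_β(ν)·sup_{v∈ℝ³}(1+|v|)^β g(v). -/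
open MeasureTheory Real Matrix ENNReal

/-!
Since `trace Θ = 3T`, the tensor `𝒯_ν` lies between two multiples of `T · Id`, so `M_ν` is at most
a constant times `ρ R⁻³ exp (-|v - u|² / R²)`, where `R = √(6T)`. With `L = max (1 + |u|) (2R)` one
has `1 + |v| ≤ L (1 + |v - u| / R)`, and the Gaussian absorbs the `β`-th power of the second factor.
It remains to show `ρ L ^ β ≤ C N R³`, where `N = sup (1 + |v|) ^ β g`.

* If `2R ≤ 1 + |u|`, then by Chebyshev half of the mass lies in the ball `B(u, R)`, on which
  `1 + |v|` is comparable to `1 + |u|`.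
* Otherwise `L = 2R`. The second moment about the origin is at least `3ρT = ρR² / 2`, and the region
  `|v| ≤ R / 2` carries at most half of it. The rest comes from the tail, where
  `g ≤ N |v| ^ (-β)`, and `∫ |v| ^ (2 - β)` converges at infinity because `β > 5`.
-/

section ScalarBounds

open scoped MatrixOrder

variable {n : Type*} [DecidableEq n] {A : Matrix n n ℝ} {a b : ℝ}

lemma isHermitian_of_smul_one_le (h : a • 1 ≤ A) : A.IsHermitian := by
  simpa using (le_iff.1 h).isHermitian.add (isHermitian_one.smul (IsSelfAdjoint.all a))

lemma posDef_of_smul_one_le (ha : 0 < a) (h : a • 1 ≤ A) : A.PosDef := by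
  simpa using (PosDef.one.smul ha).add_posSemidef (le_iff.1 h)

variable [Fintype n]

lemma pow_card_le_det_of_smul_one_le (ha : 0 ≤ a) (h : a • 1 ≤ A) :
    a ^ Fintype.card n ≤ A.det := by
  have hA := isHermitian_of_smul_one_le h
  have hle (i : n) : a ≤ hA.eigenvalues i := by
    rw [← Algebra.algebraMap_eq_smul_one, algebraMap_le_iff_le_spectrum hA] at h
    exact h _ (hA.eigenvalues_mem_spectrum_real i)
  calc a ^ Fintype.card n = ∏ _i : n, a := by simp
    _ ≤ ∏ i, hA.eigenvalues i := Finset.prod_le_prod (fun _ _ => ha) fun i _ => hle i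
    _ = A.det := by simp [hA.det_eq_prod_eigenvalues]

lemma le_trace_smul_one (hA : 0 ≤ A) : A ≤ A.trace • 1 := by
  have hA' := nonneg_iff_posSemidef.1 hA
  rw [← Algebra.algebraMap_eq_smul_one]
  refine le_algebraMap_of_spectrum_le ?_ hA'.isHermitian
  rw [hA'.isHermitian.spectrum_real_eq_range_eigenvalues, Set.forall_mem_range]
  intro i
  simpa [hA'.isHermitian.trace_eq_sum_eigenvalues] using
    Finset.single_le_sum (fun j _ => hA'.eigenvalues_nonneg j) (Finset.mem_univ i)

lemma inv_smul_one_le_inv (hA : A.PosDef) (hb : b ≠ 0) (h : A ≤ b • 1) : b⁻¹ • 1 ≤ A⁻¹ := by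
  have hH : (A⁻¹ - b⁻¹ • 1)ᴴ = A⁻¹ - b⁻¹ • 1 :=
    (hA.isHermitian.inv.sub (isHermitian_one.smul (IsSelfAdjoint.all _))).eq
  have hsquare : A⁻¹ - b⁻¹ • 1 =
      (A⁻¹ - b⁻¹ • 1)ᴴ * A * (A⁻¹ - b⁻¹ • 1) + (b⁻¹ ^ 2) • (b • 1 - A) := by
    have hu : IsUnit A.det := hA.isUnit.map detMonoidHom
    rw [hH]
    simp only [sub_mul, mul_sub, nonsing_inv_mul _ hu, mul_nonsing_inv _ hu, one_mul, mul_one,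
      smul_mul_assoc, mul_smul_comm, smul_sub, smul_smul, sq, mul_assoc, inv_mul_cancel₀ hb]
    abel
  rw [le_iff, hsquare]
  exact (hA.posSemidef.conjTranspose_mul_mul_same _).add ((le_iff.1 h).smul (sq_nonneg _))

lemma dotProduct_div_le_dotProduct_inv_mulVec (hA : A.PosDef) (hb : b ≠ 0) (h : A ≤ b • 1)
    (x : n → ℝ) : (x ⬝ᵥ x) / b ≤ x ⬝ᵥ (A⁻¹ *ᵥ x) := by
  have := (le_iff.1 (inv_smul_one_le_inv hA hb h)).dotProduct_mulVec_nonneg x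
  simp only [star_trivial, sub_mulVec, smul_mulVec, one_mulVec, dotProduct_sub, dotProduct_smul,
    smul_eq_mul, sub_nonneg] at this
  rwa [div_eq_inv_mul]

lemma exp_neg_inv_div_sqrt_det_le (ha : 0 < a) (hb : 0 < b) (haA : a • 1 ≤ A) (hAb : A ≤ b • 1)
    (x : n → ℝ) :
    exp (-(1 / 2) * (x ⬝ᵥ (A⁻¹ *ᵥ x))) / √((2 * π) • A).det ≤
      exp (-(x ⬝ᵥ x) / (2 * b)) / √((2 * π * a) ^ Fintype.card n) := by
  have hdet : (2 * π * a) ^ Fintype.card n ≤ ((2 * π) • A).det := by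
    rw [det_smul, mul_pow]
    gcongr
    exact pow_card_le_det_of_smul_one_le ha.le haA
  have hquad : -(1 / 2) * (x ⬝ᵥ (A⁻¹ *ᵥ x)) ≤ -(x ⬝ᵥ x) / (2 * b) := by
    have := dotProduct_div_le_dotProduct_inv_mulVec (posDef_of_smul_one_le ha haA) hb.ne' hAb x
    calc -(1 / 2) * (x ⬝ᵥ (A⁻¹ *ᵥ x)) ≤ -(1 / 2) * ((x ⬝ᵥ x) / b) := by linarith
      _ = -(x ⬝ᵥ x) / (2 * b) := by field_simp
  gcongr

end ScalarBounds

lemma one_add_rpow_mul_exp_neg_sq_le {β s : ℝ} (hβ : 0 ≤ β) (hs : 0 ≤ s) :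
    (1 + s) ^ β * exp (-s ^ 2) ≤ exp (β ^ 2 / 4) := by
  have hexp : (1 + s) ^ β ≤ exp (β * s) := by
    rw [mul_comm, exp_mul]
    exact rpow_le_rpow (by positivity) (by linarith [add_one_le_exp s]) hβ
  calc (1 + s) ^ β * exp (-s ^ 2) ≤ exp (β * s) * exp (-s ^ 2) := by gcongr
    _ = exp (β * s + -s ^ 2) := (exp_add _ _).symm
    _ ≤ exp (β ^ 2 / 4) := exp_le_exp.2 (by nlinarith [sq_nonneg (β / 2 - s)])

section MassAndMoments

lemma integral_le_two_mul_setIntegral_ball {X : Type*} [PseudoMetricSpace X] [MeasurableSpace X]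
    [OpensMeasurableSpace X] {μ : Measure X} {g : X → ℝ} {c : X} {R : ℝ} {k : ℕ}
    (hg0 : ∀ x, 0 ≤ g x) (hg : Integrable g μ) (hgk : Integrable (fun x => dist x c ^ k * g x) μ)
    (hR : 0 < R) (h : 2 * ∫ x, dist x c ^ k * g x ∂μ ≤ R ^ k * ∫ x, g x ∂μ) :
    ∫ x, g x ∂μ ≤ 2 * ∫ x in Metric.ball c R, g x ∂μ := by
  have htail : R ^ k * ∫ x in (Metric.ball c R)ᶜ, g x ∂μ ≤ ∫ x, dist x c ^ k * g x ∂μ :=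
    calc R ^ k * ∫ x in (Metric.ball c R)ᶜ, g x ∂μ
        = ∫ x in (Metric.ball c R)ᶜ, R ^ k * g x ∂μ := (integral_const_mul _ _).symm
      _ ≤ ∫ x in (Metric.ball c R)ᶜ, dist x c ^ k * g x ∂μ := by
          refine setIntegral_mono_on (hg.const_mul _).integrableOn hgk.integrableOn
            measurableSet_ball.compl fun x hx => ?_
          have hRx : R ≤ dist x c := by simpa using hx
          have := hg0 x
          gcongr
      _ ≤ ∫ x, dist x c ^ k * g x ∂μ :=
          setIntegral_le_integral hgk (.of_forall fun x => mul_nonneg (by positivity) (hg0 x))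
  have hsplit := integral_add_compl (measurableSet_ball (x := c) (ε := R)) hg
  have : 2 * ∫ x in (Metric.ball c R)ᶜ, g x ∂μ ≤ ∫ x, g x ∂μ :=
    le_of_mul_le_mul_left (by linarith) (pow_pos hR k)
  linarith

lemma pow_finrank_sub_one_smul_indicator_Ioi (E : Type*) [NormedAddCommGroup E] [NormedSpace ℝ E]
    [FiniteDimensional ℝ E] [Nontrivial E] (p r : ℝ) :
    Set.EqOn
      (fun y : ℝ => y ^ (Module.finrank ℝ E - 1) • (Set.Ioi r).indicator (fun t => t ^ (-p)) y)
      ((Set.Ioi r).indicator fun y => y ^ (Module.finrank ℝ E - 1 - p)) (Set.Ioi 0) := by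
  intro y hy
  by_cases hyr : y ∈ Set.Ioi r
  · simp only [Set.indicator_of_mem hyr, smul_eq_mul]
    rw [← Real.rpow_natCast, ← Real.rpow_add hy, Nat.cast_pred Module.finrank_pos,
      ← sub_eq_add_neg]
  · simp [Set.indicator_of_notMem hyr]

variable {E : Type*} [NormedAddCommGroup E] [MeasurableSpace E] {μ : Measure E} {g : E → ℝ}

lemma setIntegral_ball_mul_one_add_norm_rpow_le {c : E} {R β N : ℝ}
    (hμ : μ (Metric.ball c R) ≠ ⊤) (hg0 : ∀ v, 0 ≤ g v) (hβ : 0 ≤ β)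
    (hN : ∀ v, (1 + ‖v‖) ^ β * g v ≤ N) (hRc : 2 * R ≤ 1 + ‖c‖) :
    (∫ v in Metric.ball c R, g v ∂μ) * (1 + ‖c‖) ^ β ≤ 2 ^ β * N * μ.real (Metric.ball c R) := by
  have hpt : ∀ v ∈ Metric.ball c R, ‖g v * (1 + ‖c‖) ^ β‖ ≤ 2 ^ β * N := by
    intro v hv
    have hcv : 1 + ‖c‖ ≤ 2 * (1 + ‖v‖) := by
      linarith [norm_sub_norm_le c v, mem_ball_iff_norm'.1 hv]
    have := hg0 v
    calc ‖g v * (1 + ‖c‖) ^ β‖ = g v * (1 + ‖c‖) ^ β := norm_of_nonneg (by positivity)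
      _ ≤ g v * (2 * (1 + ‖v‖)) ^ β := by gcongr
      _ = 2 ^ β * ((1 + ‖v‖) ^ β * g v) := by
          rw [mul_rpow (by positivity) (by positivity)]
          ring
      _ ≤ 2 ^ β * N := by gcongr; exact hN v
  rw [← integral_mul_const]
  exact (le_norm_self _).trans (norm_setIntegral_le_of_norm_le_const hμ.lt_top hpt)

lemma measurableSet_lt_norm [OpensMeasurableSpace E] (r : ℝ) : MeasurableSet {v : E | r < ‖v‖} :=
  measurableSet_lt measurable_const measurable_norm

variable [NormedSpace ℝ E] [FiniteDimensional ℝ E] [Nontrivial E] [BorelSpace E]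
  [μ.IsAddHaarMeasure]

variable (μ) in
lemma integrableOn_norm_rpow_neg {p r : ℝ} (hp : Module.finrank ℝ E < p) (hr : 0 < r) :
    IntegrableOn (fun v : E => ‖v‖ ^ (-p)) {v | r < ‖v‖} μ := by
  rw [← integrable_indicator_iff (measurableSet_lt_norm r)]
  change Integrable (fun v : E => (Set.Ioi r).indicator (fun t => t ^ (-p)) ‖v‖) μ
  rw [integrable_fun_norm_addHaar,
    integrableOn_congr_fun (pow_finrank_sub_one_smul_indicator_Ioi E p r) measurableSet_Ioi]
  exact ((integrableOn_Ioi_rpow_of_lt (by linarith) hr).integrable_indicator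
    measurableSet_Ioi).integrableOn

variable (μ) in
lemma setIntegral_norm_rpow_neg {p r : ℝ} (hp : Module.finrank ℝ E < p) (hr : 0 < r) :
    ∫ v in {v : E | r < ‖v‖}, ‖v‖ ^ (-p) ∂μ =
      Module.finrank ℝ E * μ.real (Metric.ball 0 1) / (p - Module.finrank ℝ E) *
        r ^ (Module.finrank ℝ E - p) := by
  rw [← integral_indicator (measurableSet_lt_norm r)]
  change ∫ v : E, (Set.Ioi r).indicator (fun t => t ^ (-p)) ‖v‖ ∂μ = _
  rw [integral_fun_norm_addHaar,
    setIntegral_congr_fun measurableSet_Ioi (pow_finrank_sub_one_smul_indicator_Ioi E p r),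
    setIntegral_indicator measurableSet_Ioi, Set.inter_eq_right.2 (Set.Ioi_subset_Ioi hr.le),
    integral_Ioi_rpow_of_lt (by linarith) hr, sub_right_comm, sub_add_cancel, nsmul_eq_mul,
    smul_eq_mul, ← neg_sub p, div_neg, neg_div, neg_neg]
  ring

lemma setIntegral_norm_pow_mul_le {β N r : ℝ} {k : ℕ}
    (hgk : Integrable (fun v => ‖v‖ ^ k * g v) μ) (hβ : Module.finrank ℝ E + k < β)
    (hN : ∀ v, ‖v‖ ^ β * g v ≤ N) (hr : 0 < r) :
    ∫ v in {v | r < ‖v‖}, ‖v‖ ^ k * g v ∂μ ≤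
      N * (Module.finrank ℝ E * μ.real (Metric.ball 0 1) / (β - k - Module.finrank ℝ E) *
        r ^ (Module.finrank ℝ E - (β - k))) := by
  have hβk : Module.finrank ℝ E < β - k := by linarith
  rw [← setIntegral_norm_rpow_neg μ hβk hr, ← integral_const_mul]
  refine setIntegral_mono_on hgk.integrableOn
    ((integrableOn_norm_rpow_neg μ hβk hr).const_mul N) (measurableSet_lt_norm r) fun v hv => ?_
  have hv0 : 0 < ‖v‖ := hr.trans hv
  calc ‖v‖ ^ k * g v = ‖v‖ ^ β * g v * ‖v‖ ^ (-(β - k)) := by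
        rw [mul_right_comm, ← Real.rpow_add hv0, ← Real.rpow_natCast, neg_sub, add_sub_cancel]
    _ ≤ N * ‖v‖ ^ (-(β - k)) := by gcongr; exact hN v

lemma integral_mul_rpow_le_of_two_mul_le_moment {β N r : ℝ} {k : ℕ} (hg0 : ∀ v, 0 ≤ g v)
    (hg : Integrable g μ) (hgk : Integrable (fun v => ‖v‖ ^ k * g v) μ)
    (hβ : Module.finrank ℝ E + k < β) (hN : ∀ v, ‖v‖ ^ β * g v ≤ N) (hr : 0 < r)
    (h : 2 * (r ^ k * ∫ v, g v ∂μ) ≤ ∫ v, ‖v‖ ^ k * g v ∂μ) :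
    (∫ v, g v ∂μ) * r ^ β ≤
      Module.finrank ℝ E * μ.real (Metric.ball 0 1) / (β - k - Module.finrank ℝ E) * N *
        r ^ Module.finrank ℝ E := by
  set d := Module.finrank ℝ E
  set K := d * μ.real (Metric.ball 0 1) / (β - k - d)
  have hinner : ∫ v in {v | r < ‖v‖}ᶜ, ‖v‖ ^ k * g v ∂μ ≤ r ^ k * ∫ v, g v ∂μ :=
    calc ∫ v in {v | r < ‖v‖}ᶜ, ‖v‖ ^ k * g v ∂μ
        ≤ ∫ v in {v | r < ‖v‖}ᶜ, r ^ k * g v ∂μ := by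
          refine setIntegral_mono_on hgk.integrableOn (hg.const_mul _).integrableOn
            (measurableSet_lt_norm r).compl fun v hv => ?_
          have hvr : ‖v‖ ≤ r := not_lt.1 hv
          have := hg0 v
          gcongr
      _ ≤ ∫ v, r ^ k * g v ∂μ :=
          setIntegral_le_integral (hg.const_mul _)
            (.of_forall fun v => mul_nonneg (by positivity) (hg0 v))
      _ = r ^ k * ∫ v, g v ∂μ := integral_const_mul _ _
  have hmass : r ^ k * ∫ v, g v ∂μ ≤ N * (K * r ^ (d - (β - k))) := by
    have hsplit := integral_add_compl (measurableSet_lt_norm r) hgk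
    have houter := setIntegral_norm_pow_mul_le hgk hβ hN hr
    linarith
  calc (∫ v, g v ∂μ) * r ^ β = r ^ k * (∫ v, g v ∂μ) * r ^ (β - k) := by
        rw [mul_right_comm, ← Real.rpow_natCast r k, ← Real.rpow_add hr, add_sub_cancel, mul_comm]
    _ ≤ N * (K * r ^ (d - (β - k))) * r ^ (β - k) := by gcongr
    _ = K * N * (r ^ (d - (β - k)) * r ^ (β - k)) := by ring
    _ = K * N * r ^ d := by rw [← Real.rpow_add hr, sub_add_cancel, Real.rpow_natCast]

end MassAndMoments

section SecondMoments

variable {E : Type*} [NormedAddCommGroup E] [InnerProductSpace ℝ E]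

lemma sq_norm_sub_mul (c v : E) (a : ℝ) :
    ‖v - c‖ ^ 2 * a = ‖v‖ ^ 2 * a - 2 * inner ℝ c (a • v) + ‖c‖ ^ 2 * a := by
  rw [norm_sub_sq_real, inner_smul_right, real_inner_comm]
  ring

variable [MeasurableSpace E] {μ : Measure E} {g : E → ℝ}

lemma integrable_smul_of_sq_norm_mul [OpensMeasurableSpace E] [SecondCountableTopology E]
    (hg : Integrable g μ) (hg2 : Integrable (fun v => ‖v‖ ^ 2 * g v) μ) :
    Integrable (fun v => g v • v) μ := by
  refine (hg.norm.add hg2.norm).mono' (hg.1.smul aestronglyMeasurable_id) (.of_forall fun v => ?_)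
  simp only [Pi.add_apply, norm_smul, norm_mul, norm_pow, norm_norm]
  nlinarith [mul_nonneg (norm_nonneg (g v)) (sq_nonneg (‖v‖ - 1)),
    mul_nonneg (norm_nonneg (g v)) (sq_nonneg ‖v‖), norm_nonneg (g v)]

lemma integrable_sq_norm_sub_mul (hg : Integrable g μ) (hg1 : Integrable (fun v => g v • v) μ)
    (hg2 : Integrable (fun v => ‖v‖ ^ 2 * g v) μ) (c : E) :
    Integrable (fun v => ‖v - c‖ ^ 2 * g v) μ := by
  simp only [sq_norm_sub_mul]
  exact (hg2.sub ((hg1.const_inner c).const_mul 2)).add (hg.const_mul _)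

lemma integral_sq_norm_sub_mul [CompleteSpace E] (hg : Integrable g μ)
    (hg1 : Integrable (fun v => g v • v) μ) (hg2 : Integrable (fun v => ‖v‖ ^ 2 * g v) μ) {c : E}
    (hc : ∫ v, g v • v ∂μ = (∫ v, g v ∂μ) • c) :
    ∫ v, ‖v - c‖ ^ 2 * g v ∂μ = ∫ v, ‖v‖ ^ 2 * g v ∂μ - (∫ v, g v ∂μ) * ‖c‖ ^ 2 := by
  have hinner : Integrable (fun v => 2 * inner ℝ c (g v • v)) μ :=
    (hg1.const_inner c).const_mul 2
  simp only [sq_norm_sub_mul]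
  rw [integral_add (by exact hg2.sub hinner) (hg.const_mul _), integral_sub hg2 hinner,
    integral_const_mul, integral_const_mul, integral_inner hg1, hc, inner_smul_right,
    real_inner_self_eq_norm_sq]
  ring

end SecondMoments

/-- A mass density on velocity space with finite mass and finite kinetic energy. These are the
functions for which the moments `dens`, `bulk`, `temp` and `stress` are convergent integrals. -/
structure FiniteEnergy (g : E3 → ℝ) : Prop where
  nonneg : ∀ v, 0 ≤ g v
  integrable : Integrable g
  integrable_sq_norm_mul : Integrable fun v => ‖v‖ ^ 2 * g v

/-- The length scale `R = √(6T)`, normalized so that the Gaussian of variance `3T`, which dominates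
`M_ν`, is a multiple of `exp (-|v - u|² / R²)`. -/
noncomputable def thermalRadius (g : E3 → ℝ) : ℝ := √(6 * temp g)

/-- The scale `L = max (1 + |u|) (2R)` in terms of which `1 + |v| ≤ L (1 + |v - u| / R)`. -/
noncomputable def velocityScale (g : E3 → ℝ) : ℝ := max (1 + ‖bulk g‖) (2 * thermalRadius g)

section Moments

variable {g : E3 → ℝ}

lemma integral_smul_eq_dens_smul_bulk (hρ : dens g ≠ 0) : ∫ v, g v • v = dens g • bulk g := by
  rw [bulk, smul_inv_smul₀ hρ]

lemma integral_sq_norm_sub_bulk_mul (hρ : dens g ≠ 0) :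
    ∫ v, ‖v - bulk g‖ ^ 2 * g v = 3 * dens g * temp g := by
  rw [temp, mul_inv_cancel_left₀ (by simpa using hρ)]

lemma sq_thermalRadius (hT : 0 ≤ temp g) : thermalRadius g ^ 2 = 6 * temp g :=
  sq_sqrt (by positivity)

lemma thermalRadius_pos (hT : 0 < temp g) : 0 < thermalRadius g :=
  sqrt_pos.2 (by positivity)

lemma velocityScale_pos (g : E3 → ℝ) : 0 < velocityScale g :=
  lt_max_of_lt_left (by positivity)

lemma one_add_norm_le_velocityScale_mul (hT : 0 < temp g) (v : E3) :
    1 + ‖v‖ ≤ velocityScale g * (1 + ‖v - bulk g‖ / thermalRadius g) := by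
  have hR := thermalRadius_pos hT
  have hRL : thermalRadius g ≤ velocityScale g :=
    (by linarith : thermalRadius g ≤ 2 * thermalRadius g).trans (le_max_right _ _)
  calc 1 + ‖v‖ ≤ (1 + ‖bulk g‖) + ‖v - bulk g‖ := by
        linarith [norm_le_norm_add_norm_sub' v (bulk g)]
    _ = (1 + ‖bulk g‖) + thermalRadius g * (‖v - bulk g‖ / thermalRadius g) := by
        rw [mul_div_cancel₀ _ hR.ne']
    _ ≤ velocityScale g + velocityScale g * (‖v - bulk g‖ / thermalRadius g) := by
        gcongr
        exact le_max_left _ _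
    _ = velocityScale g * (1 + ‖v - bulk g‖ / thermalRadius g) := by ring

end Moments

namespace FiniteEnergy

open scoped MatrixOrder

variable {g : E3 → ℝ}

lemma dens_nonneg (h : FiniteEnergy g) : 0 ≤ dens g :=
  integral_nonneg h.nonneg

lemma temp_nonneg (h : FiniteEnergy g) : 0 ≤ temp g :=
  mul_nonneg (inv_nonneg.2 (mul_nonneg (by norm_num) h.dens_nonneg))
    (integral_nonneg fun v => mul_nonneg (sq_nonneg _) (h.nonneg v))

lemma integrable_smul (h : FiniteEnergy g) : Integrable fun v => g v • v :=
  integrable_smul_of_sq_norm_mul h.integrable h.integrable_sq_norm_mul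

protected lemma integrable_sq_norm_sub_mul (h : FiniteEnergy g) (c : E3) :
    Integrable fun v => ‖v - c‖ ^ 2 * g v :=
  integrable_sq_norm_sub_mul h.integrable h.integrable_smul h.integrable_sq_norm_mul c

lemma three_mul_dens_mul_temp_le (h : FiniteEnergy g) (hρ : dens g ≠ 0) :
    3 * dens g * temp g ≤ ∫ v, ‖v‖ ^ 2 * g v := by
  rw [← integral_sq_norm_sub_bulk_mul hρ,
    integral_sq_norm_sub_mul h.integrable h.integrable_smul h.integrable_sq_norm_mul
      (integral_smul_eq_dens_smul_bulk hρ)]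
  exact sub_le_self _ (mul_nonneg h.dens_nonneg (sq_nonneg _))

lemma integrable_stress_apply (h : FiniteEnergy g) (i j : Fin 3) :
    Integrable fun v => (v - bulk g) i * (v - bulk g) j * g v := by
  have hmeas : AEStronglyMeasurable (fun v => (v - bulk g) i * (v - bulk g) j * g v) :=
    .mul (by fun_prop) h.integrable.1
  refine (h.integrable_sq_norm_sub_mul (bulk g)).mono' hmeas (.of_forall fun v => ?_)
  rw [norm_mul, norm_mul, norm_of_nonneg (h.nonneg v), sq]
  gcongr
  · exact h.nonneg v
  · exact PiLp.norm_apply_le _ i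
  · exact PiLp.norm_apply_le _ j

lemma dotProduct_stress_mulVec (h : FiniteEnergy g) (x : Fin 3 → ℝ) :
    x ⬝ᵥ (stress g *ᵥ x) = (dens g)⁻¹ * ∫ v, (x ⬝ᵥ (v - bulk g).ofLp) ^ 2 * g v := by
  have hexpand (v : E3) : (x ⬝ᵥ (v - bulk g).ofLp) ^ 2 * g v =
      ∑ i, ∑ j, x i * x j * ((v - bulk g) i * (v - bulk g) j * g v) := by
    simp only [dotProduct, sq, Finset.sum_mul, Finset.mul_sum]
    exact Finset.sum_congr rfl fun i _ => Finset.sum_congr rfl fun j _ => by ring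
  have hint (i j : Fin 3) := (h.integrable_stress_apply i j).const_mul (x i * x j)
  simp_rw [hexpand]
  rw [integral_finsetSum _ fun i _ => integrable_finsetSum _ fun j _ => hint i j]
  simp_rw [integral_finsetSum _ fun j _ => hint _ j, integral_const_mul]
  simp only [dotProduct, mulVec, stress, of_apply, Finset.mul_sum]
  exact Finset.sum_congr rfl fun i _ => Finset.sum_congr rfl fun j _ => by ring

lemma stress_nonneg (h : FiniteEnergy g) : 0 ≤ stress g := by
  have hherm : (stress g).IsHermitian := by
    ext i j
    simp only [stress, conjTranspose_apply, of_apply, star_trivial, mul_comm ((_ - bulk g) i)]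
  refine nonneg_iff_posSemidef.2 (.of_dotProduct_mulVec_nonneg hherm fun x => ?_)
  rw [star_trivial, h.dotProduct_stress_mulVec]
  exact mul_nonneg (inv_nonneg.2 h.dens_nonneg)
    (integral_nonneg fun v => mul_nonneg (sq_nonneg _) (h.nonneg v))

lemma trace_stress (h : FiniteEnergy g) : (stress g).trace = 3 * temp g := by
  have hnorm (v : E3) : ‖v - bulk g‖ ^ 2 * g v =
      ∑ i, (v - bulk g) i * (v - bulk g) i * g v := by
    rw [EuclideanSpace.real_norm_sq_eq, Finset.sum_mul]
    simp only [sq]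
  simp only [temp, hnorm]
  rw [integral_finsetSum _ fun i _ => h.integrable_stress_apply i i, mul_inv]
  simp only [trace, diag_apply, stress, of_apply, ← Finset.mul_sum]
  ring

lemma stress_le_smul_one (h : FiniteEnergy g) : stress g ≤ (3 * temp g) • 1 := by
  simpa only [h.trace_stress] using le_trace_smul_one h.stress_nonneg

variable {ν : ℝ}

lemma smul_one_le_tempTensor (h : FiniteEnergy g) :
    (min (1 - ν) (1 + 2 * ν) * temp g) • 1 ≤ tempTensor g ν := by
  have hT := h.temp_nonneg
  rcases le_total 0 ν with hν | hν
  · calc (min (1 - ν) (1 + 2 * ν) * temp g) • (1 : Matrix (Fin 3) (Fin 3) ℝ)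
        ≤ ((1 - ν) * temp g) • 1 := by
          refine smul_le_smul_of_nonneg_right ?_ zero_le_one
          gcongr
          exact min_le_left _ _
      _ ≤ tempTensor g ν := le_add_of_nonneg_right (smul_nonneg hν h.stress_nonneg)
  · calc (min (1 - ν) (1 + 2 * ν) * temp g) • (1 : Matrix (Fin 3) (Fin 3) ℝ)
        ≤ ((1 + 2 * ν) * temp g) • 1 := by
          refine smul_le_smul_of_nonneg_right ?_ zero_le_one
          gcongr
          exact min_le_right _ _
      _ = ((1 - ν) * temp g) • 1 + ν • ((3 * temp g) • 1) := by
          rw [smul_smul, ← add_smul]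
          congr 1
          ring
      _ ≤ tempTensor g ν := add_le_add_right (smul_le_smul_of_nonpos_left h.stress_le_smul_one hν) _

lemma tempTensor_le_smul_one (h : FiniteEnergy g) (hν1 : -(1 / 2) ≤ ν) (hν2 : ν ≤ 1) :
    tempTensor g ν ≤ (3 * temp g) • 1 := by
  have hnonneg : 0 ≤ tempTensor g ν :=
    (smul_nonneg (mul_nonneg (le_min (by linarith) (by linarith)) h.temp_nonneg)
      zero_le_one).trans h.smul_one_le_tempTensor
  have htrace : (tempTensor g ν).trace = 3 * temp g := by
    rw [tempTensor, trace_add, trace_smul, trace_smul, trace_one, h.trace_stress,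
      Fintype.card_fin, smul_eq_mul, smul_eq_mul]
    push_cast
    ring
  simpa only [htrace] using le_trace_smul_one hnonneg

lemma aGauss_le_mul_exp_neg_sq (h : FiniteEnergy g) (hT : 0 < temp g) (hν1 : -(1 / 2) < ν)
    (hν2 : ν < 1) (v : E3) :
    aGauss g ν v ≤
      dens g * (exp (-(‖v - bulk g‖ / thermalRadius g) ^ 2) /
        √((2 * π * (min (1 - ν) (1 + 2 * ν) * temp g)) ^ 3)) := by
  have hm : 0 < min (1 - ν) (1 + 2 * ν) := lt_min (by linarith) (by linarith)
  have hcompare := exp_neg_inv_div_sqrt_det_le (by positivity) (by positivity)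
    h.smul_one_le_tempTensor (h.tempTensor_le_smul_one hν1.le hν2.le) (v - bulk g).ofLp
  have hexp : -((v - bulk g).ofLp ⬝ᵥ (v - bulk g).ofLp) / (2 * (3 * temp g)) =
      -(‖v - bulk g‖ / thermalRadius g) ^ 2 := by
    rw [div_pow, sq_thermalRadius hT.le, EuclideanSpace.real_norm_sq_eq]
    simp only [dotProduct, ← sq]
    ring
  rw [Fintype.card_fin, hexp] at hcompare
  rw [aGauss, div_mul_eq_mul_div, mul_div_assoc]
  exact mul_le_mul_of_nonneg_left hcompare h.dens_nonneg

lemma rpow_mul_aGauss_le (h : FiniteEnergy g) (hT : 0 < temp g) (hν1 : -(1 / 2) < ν)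
    (hν2 : ν < 1) {β : ℝ} (hβ : 0 ≤ β) (v : E3) :
    (1 + ‖v‖) ^ β * aGauss g ν v ≤
      exp (β ^ 2 / 4) / √((π / 3 * min (1 - ν) (1 + 2 * ν)) ^ 3) *
        (dens g * velocityScale g ^ β / thermalRadius g ^ 3) := by
  set R := thermalRadius g
  set s := ‖v - bulk g‖ / R
  set m := min (1 - ν) (1 + 2 * ν)
  have hR : 0 < R := thermalRadius_pos hT
  have hL : 0 < velocityScale g := velocityScale_pos g
  have hρ : 0 ≤ dens g := h.dens_nonneg
  have hm : 0 < m := lt_min (by linarith) (by linarith)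
  have hdet : √((2 * π * (m * temp g)) ^ 3) = √((π / 3 * m) ^ 3) * R ^ 3 := by
    rw [← sqrt_sq (pow_pos hR 3).le, ← sqrt_mul (by positivity), ← pow_mul, mul_comm 3 2, pow_mul,
      sq_thermalRadius hT.le]
    congr 1
    ring
  calc (1 + ‖v‖) ^ β * aGauss g ν v
      ≤ (1 + ‖v‖) ^ β * (dens g * (exp (-s ^ 2) / √((2 * π * (m * temp g)) ^ 3))) := by
        gcongr
        exact h.aGauss_le_mul_exp_neg_sq hT hν1 hν2 v
    _ ≤ (velocityScale g * (1 + s)) ^ β *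
          (dens g * (exp (-s ^ 2) / √((2 * π * (m * temp g)) ^ 3))) := by
        gcongr
        exact one_add_norm_le_velocityScale_mul hT v
    _ = (1 + s) ^ β * exp (-s ^ 2) / √((π / 3 * m) ^ 3) *
          (dens g * velocityScale g ^ β / R ^ 3) := by
        rw [mul_rpow hL.le (by positivity), hdet]
        ring
    _ ≤ _ := by
        gcongr
        exact one_add_rpow_mul_exp_neg_sq_le hβ (by positivity)

variable {β N : ℝ}

lemma dens_mul_rpow_le_of_two_mul_le (h : FiniteEnergy g) (hρ : dens g ≠ 0) (hT : 0 < temp g)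
    (hβ : 0 ≤ β) (hN : ∀ v, (1 + ‖v‖) ^ β * g v ≤ N)
    (hu : 2 * thermalRadius g ≤ 1 + ‖bulk g‖) :
    dens g * (1 + ‖bulk g‖) ^ β ≤
      2 * 2 ^ β * volume.real (Metric.ball (0 : E3) 1) * N * thermalRadius g ^ 3 := by
  have hR := thermalRadius_pos hT
  have hcheb : dens g ≤ 2 * ∫ v in Metric.ball (bulk g) (thermalRadius g), g v := by
    refine integral_le_two_mul_setIntegral_ball (k := 2) h.nonneg h.integrable ?_ hR ?_
    · simpa only [dist_eq_norm] using h.integrable_sq_norm_sub_mul (bulk g)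
    · simp only [dist_eq_norm]
      rw [integral_sq_norm_sub_bulk_mul hρ, sq_thermalRadius hT.le, ← dens]
      linarith
  have hvol : volume.real (Metric.ball (bulk g) (thermalRadius g)) =
      thermalRadius g ^ 3 * volume.real (Metric.ball (0 : E3) 1) := by
    simp [measureReal_def, Measure.addHaar_ball volume (bulk g) hR.le, hR.le]
  have hball := setIntegral_ball_mul_one_add_norm_rpow_le (μ := volume) measure_ball_lt_top.ne
    h.nonneg hβ hN hu
  calc dens g * (1 + ‖bulk g‖) ^ β
      ≤ 2 * (∫ v in Metric.ball (bulk g) (thermalRadius g), g v) * (1 + ‖bulk g‖) ^ β := by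
        gcongr
    _ ≤ 2 * (2 ^ β * N * (thermalRadius g ^ 3 * volume.real (Metric.ball (0 : E3) 1))) := by
        rw [mul_assoc, ← hvol]
        gcongr
    _ = _ := by ring

lemma dens_mul_rpow_two_mul_thermalRadius_le (h : FiniteEnergy g) (hρ : dens g ≠ 0)
    (hT : 0 < temp g) (hβ : 5 < β) (hN : ∀ v, (1 + ‖v‖) ^ β * g v ≤ N) :
    dens g * (2 * thermalRadius g) ^ β ≤
      4 ^ β * (3 * volume.real (Metric.ball (0 : E3) 1) / (β - 5)) / 8 * N *
        thermalRadius g ^ 3 := by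
  have hR := thermalRadius_pos hT
  have hN' (v : E3) : ‖v‖ ^ β * g v ≤ N := by
    refine (mul_le_mul_of_nonneg_right ?_ (h.nonneg v)).trans (hN v)
    gcongr
    linarith
  have hmoment : 2 * ((thermalRadius g / 2) ^ 2 * dens g) ≤ ∫ v, ‖v‖ ^ 2 * g v := by
    rw [div_pow, sq_thermalRadius hT.le]
    linarith [h.three_mul_dens_mul_temp_le hρ]
  have hmass := integral_mul_rpow_le_of_two_mul_le_moment h.nonneg h.integrable
    h.integrable_sq_norm_mul (by norm_num; linarith) hN' (half_pos hR) hmoment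
  rw [← dens, finrank_euclideanSpace_fin] at hmass
  push_cast at hmass
  calc dens g * (2 * thermalRadius g) ^ β
      = 4 ^ β * (dens g * (thermalRadius g / 2) ^ β) := by
        rw [mul_left_comm, ← mul_rpow (by norm_num) (half_pos hR).le]
        ring_nf
    _ ≤ 4 ^ β * (3 * volume.real (Metric.ball (0 : E3) 1) / (β - 2 - 3) * N *
          (thermalRadius g / 2) ^ 3) := by gcongr
    _ = _ := by
        rw [sub_sub, show (2 : ℝ) + 3 = 5 by norm_num]
        ring

end FiniteEnergy

lemma exists_dens_mul_rpow_velocityScale_le {β : ℝ} (hβ : 5 < β) :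
    ∃ C > 0, ∀ (g : E3 → ℝ) (N : ℝ), FiniteEnergy g → dens g ≠ 0 → 0 < temp g →
      (∀ v, (1 + ‖v‖) ^ β * g v ≤ N) →
      dens g * velocityScale g ^ β ≤ C * N * thermalRadius g ^ 3 := by
  set ω := volume.real (Metric.ball (0 : E3) 1)
  have hω : 0 < ω :=
    ENNReal.toReal_pos (Metric.measure_ball_pos _ _ one_pos).ne' measure_ball_lt_top.ne
  refine ⟨max (2 * 2 ^ β * ω) (4 ^ β * (3 * ω / (β - 5)) / 8),
    lt_max_of_lt_left (by positivity), fun g N h hρ hT hN => ?_⟩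
  have hR := thermalRadius_pos hT
  have hN0 : 0 ≤ N := (mul_nonneg (by positivity) (h.nonneg 0)).trans (hN 0)
  rcases le_total (2 * thermalRadius g) (1 + ‖bulk g‖) with hu | hu
  · rw [velocityScale, max_eq_left hu]
    refine (h.dens_mul_rpow_le_of_two_mul_le hρ hT (by linarith) hN hu).trans ?_
    gcongr
    exact le_max_left _ _
  · rw [velocityScale, max_eq_right hu]
    refine (h.dens_mul_rpow_two_mul_thermalRadius_le hρ hT hβ hN).trans ?_
    gcongr
    exact le_max_right _ _

lemma Nq_le_ofReal_mul {q C : ℝ} {f g : E3 → ℝ} (hC : 0 < C)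
    (h : ∀ N : ℝ, (∀ v, (1 + ‖v‖) ^ q * g v ≤ N) → ∀ v, (1 + ‖v‖) ^ q * f v ≤ C * N) :
    Nq q f ≤ ENNReal.ofReal C * Nq q g := by
  by_cases htop : Nq q g = ⊤
  · rw [htop, ENNReal.mul_top (ENNReal.ofReal_pos.2 hC).ne']
    exact le_top
  have hg (v : E3) : (1 + ‖v‖) ^ q * g v ≤ (Nq q g).toReal :=
    (ENNReal.ofReal_le_iff_le_toReal htop).1
      (le_iSup (fun v : E3 => ENNReal.ofReal ((1 + ‖v‖) ^ q * g v)) v)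
  refine iSup_le fun v => ?_
  rw [← ENNReal.ofReal_toReal htop, ← ENNReal.ofReal_mul hC.le]
  exact ENNReal.ofReal_le_ofReal (h _ hg v)

/-- estimate (3.7): the weighted sup-norm of the anisotropic Gaussian is
controlled by the weighted sup-norm of `g`. -/
theorem aGauss_weighted_bound
    (ν β : ℝ) (hν1 : -(1 / 2 : ℝ) < ν) (hν2 : ν < 1) (hβ : 5 < β) :
    ∃ Cβν > (0 : ℝ), ∀ g : E3 → ℝ,
      Measurable g → (∀ v, 0 ≤ g v) →
      Integrable g → 0 < dens g →
      Integrable (fun v => ‖v‖ ^ 2 * g v) → 0 < temp g →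
      Nq β (aGauss g ν) ≤ ENNReal.ofReal Cβν * Nq β g := by
  obtain ⟨C, hC, hdens⟩ := exists_dens_mul_rpow_velocityScale_le hβ
  have hm : 0 < min (1 - ν) (1 + 2 * ν) := lt_min (by linarith) (by linarith)
  set K := exp (β ^ 2 / 4) / √((π / 3 * min (1 - ν) (1 + 2 * ν)) ^ 3)
  have : 0 < K := by positivity
  refine ⟨K * C, by positivity, fun g _ hg0 hg hρ hg2 hT => ?_⟩
  have hE : FiniteEnergy g := ⟨hg0, hg, hg2⟩
  refine Nq_le_ofReal_mul (by positivity) fun N hN v => ?_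
  calc (1 + ‖v‖) ^ β * aGauss g ν v
      ≤ K * (dens g * velocityScale g ^ β / thermalRadius g ^ 3) :=
        hE.rpow_mul_aGauss_le hT hν1 hν2 (by linarith) v
    _ ≤ K * (C * N) := by
        gcongr
        exact (div_le_iff₀ (pow_pos (thermalRadius_pos hT) 3)).2 (hdens g N hE hρ.ne' hT hN)
    _ = K * C * N := (mul_assoc _ _ _).symm
end

section
/- Let ν ∈ (−1/2,1) and C₁ ≥ 1. There exists a constant C > 0, depending only on ν and C₁, such that for every nonnegative measurable g : ℝ³ → ℝ with finite second moment satisfying (2C₁)^{−1} ≤ ρ ≤ 2C₁, (2C₁)^{−1} ≤ T ≤ 2C₁ and |u| ≤ 2C₁, one has for all v ∈ ℝ³: |M_ν(v) − μ(v)| ≤ C·(|ρ − 1| + |u| + ∥𝒯_ν − Id∥)·exp(−|v|²/C), where ∥·∥ denotes the Frobenius norm on 3×3 matrices. -/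
open MeasureTheory Real Matrix ENNReal

/-- The Frobenius norm of a `3×3` real matrix. -/
noncomputable def frobNorm (A : Matrix (Fin 3) (Fin 3) ℝ) : ℝ :=
  Real.sqrt (∑ i, ∑ j, A i j ^ 2)

/-!
A Gaussian density of mean `u` and covariance `A` is a constant times `exp (-Φ)` with
`2 Φ(v) = log det A + (v - u)ᵀ A⁻¹ (v - u)`. In an eigenbasis of `A`, whose eigenvalues `λᵢ` lie in
a fixed compact subset of `(0, ∞)` and satisfy `|λᵢ - 1| ≤ ‖A - Id‖`, one reads off
`|Φ(v) - |v|² / 2| ≲ (1 + |v|²) (|u| + ‖A - Id‖)` and `Φ(v) ≥ |v|² / (4 K) - const`. The single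
inequality `|exp (-a) - exp (-b)| ≤ |a - b| exp (-min a b)` then controls the determinant and the
quadratic form together, half of the Gaussian decay absorbing the polynomial `1 + |v|²`. The mass
enters through `ρ G - μ = (ρ - 1) G + (G - μ)`, `G` the normalized density.

For `A = 𝒯_ν`, the stress tensor has quadratic form between `0` and `3 T` on unit vectors, so the
eigenvalues of `𝒯_ν` lie between `min (1 - ν) (1 + 2 ν) T` and `max (1 - ν) (1 + 2 ν) T`.
-/

section RealEstimates

lemma abs_exp_neg_sub_exp_neg_le {a b c : ℝ} (ha : c ≤ a) (hb : c ≤ b) :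
    |exp (-a) - exp (-b)| ≤ |a - b| * exp (-c) := by
  wlog hab : a ≤ b generalizing a b
  · rw [abs_sub_comm, abs_sub_comm a b]
    exact this hb ha (le_of_not_ge hab)
  rw [abs_of_nonneg (sub_nonneg.2 (exp_le_exp.2 (neg_le_neg hab))), abs_sub_comm,
    abs_of_nonneg (sub_nonneg.2 hab)]
  have hfactor : exp (-b) = exp (-a) * exp (a - b) := by rw [← exp_add]; congr 1; ring
  calc exp (-a) - exp (-b) = exp (-a) * (1 - exp (a - b)) := by rw [hfactor]; ring
    _ ≤ exp (-c) * (b - a) := by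
        gcongr ?_ * ?_
        · linarith [exp_le_one_iff.2 (sub_nonpos.2 hab)]
        · exact exp_le_exp.2 (neg_le_neg ha)
        · linarith [add_one_le_exp (a - b)]
    _ = (b - a) * exp (-c) := mul_comm _ _

lemma abs_inv_sub_one_le {K x : ℝ} (hK : 0 < K) (hx : K⁻¹ ≤ x) : |x⁻¹ - 1| ≤ K * |x - 1| := by
  have hx0 : 0 < x := (inv_pos.2 hK).trans_le hx
  have hfactor : x⁻¹ - 1 = x⁻¹ * (1 - x) := by field_simp
  rw [hfactor, abs_mul, abs_of_pos (inv_pos.2 hx0), abs_sub_comm 1 x]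
  gcongr
  exact inv_le_of_inv_le₀ hK hx

lemma abs_log_le_mul_abs_sub_one {K x : ℝ} (hK : 1 ≤ K) (hx : K⁻¹ ≤ x) :
    |log x| ≤ K * |x - 1| := by
  have hK0 : 0 < K := one_pos.trans_le hK
  have hx0 : 0 < x := (inv_pos.2 hK0).trans_le hx
  rw [abs_le]
  constructor
  · linarith [one_sub_inv_le_log_of_pos hx0, le_abs_self (x⁻¹ - 1), abs_inv_sub_one_le hK0 hx]
  · linarith [log_le_sub_one_of_pos hx0, le_abs_self (x - 1),
      le_mul_of_one_le_left (abs_nonneg (x - 1)) hK]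

lemma one_add_mul_exp_neg_div_le {K : ℝ} (hK : 1 ≤ K) (s : ℝ) :
    (1 + s) * exp (-(s / K)) ≤ K := by
  have hK0 : 0 < K := one_pos.trans_le hK
  rw [exp_neg, ← div_eq_mul_inv, div_le_iff₀ (exp_pos _)]
  calc 1 + s ≤ K * (s / K + 1) := by rw [mul_add, mul_div_cancel₀ _ hK0.ne']; linarith
    _ ≤ K * exp (s / K) := by gcongr; exact add_one_le_exp _

lemma exp_neg_div_sub_eq (K b s : ℝ) :
    exp (-(s / (4 * K) - b)) = exp b * exp (-(s / (8 * K))) * exp (-(s / (8 * K))) := by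
  rw [← exp_add, ← exp_add]
  congr 1
  ring

lemma two_mul_add_le_mul_one_add_sq {a b K : ℝ} (hK : 1 ≤ K) (hb : b ≤ K) :
    2 * a + b ≤ 2 * (K ^ 3 * (1 + a ^ 2)) := by
  have hK3 : K ≤ K ^ 3 := le_self_pow₀ hK (by norm_num)
  have ha : 1 + a ^ 2 ≤ K ^ 3 * (1 + a ^ 2) :=
    le_mul_of_one_le_left (by positivity) (one_le_pow₀ hK)
  have hb' : b ≤ K ^ 3 * (1 + a ^ 2) :=
    (hb.trans hK3).trans (le_mul_of_one_le_right (by positivity) (by linarith [sq_nonneg a]))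
  linarith [two_mul_le_add_sq 1 a]

lemma mul_add_two_mul_sq_add_sq_le {K d : ℝ} (hK : 1 ≤ K) (hd : 0 ≤ d) (a : ℝ) :
    K * (d + 2 * (a ^ 2 + K ^ 2)) ≤ (d + 2) * (K ^ 3 * (1 + a ^ 2)) :=
  calc K * (d + 2 * (a ^ 2 + K ^ 2)) = (d + 2 * a ^ 2) * K + 2 * K ^ 3 := by ring
    _ ≤ (d + 2 * a ^ 2) * K ^ 3 + 2 * K ^ 3 := by
      gcongr
      exact le_self_pow₀ hK (by norm_num)
    _ ≤ (d + 2 * a ^ 2) * K ^ 3 + 2 * K ^ 3 + d * a ^ 2 * K ^ 3 :=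
      le_add_of_nonneg_right (by positivity)
    _ = (d + 2) * (K ^ 3 * (1 + a ^ 2)) := by ring

end RealEstimates

section NormEstimates

variable {E : Type*} [SeminormedAddCommGroup E]

lemma norm_sub_sq_le_two_mul (x y : E) : ‖x - y‖ ^ 2 ≤ 2 * (‖x‖ ^ 2 + ‖y‖ ^ 2) :=
  (pow_le_pow_left₀ (norm_nonneg _) (norm_sub_le x y) 2).trans add_sq_le

lemma abs_norm_sub_sq_sub_norm_sq_le (x y : E) :
    |‖x - y‖ ^ 2 - ‖x‖ ^ 2| ≤ ‖y‖ * (2 * ‖x‖ + ‖y‖) := by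
  have hdiff : |‖x - y‖ - ‖x‖| ≤ ‖y‖ := by
    simpa only [sub_sub_cancel_left, norm_neg] using abs_norm_sub_norm_le (x - y) x
  rw [sq_sub_sq, abs_mul, abs_of_nonneg (by positivity), mul_comm]
  exact mul_le_mul hdiff (by linarith [norm_sub_le x y]) (by positivity) (norm_nonneg y)

end NormEstimates

section Spectral

variable {n : Type*} [Fintype n]

lemma dotProduct_self_eq_norm_sq (w : EuclideanSpace ℝ n) : w.ofLp ⬝ᵥ w.ofLp = ‖w‖ ^ 2 := by
  rw [EuclideanSpace.real_norm_sq_eq]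
  simp only [dotProduct, sq]

lemma sq_le_sum_sq_of_mulVec_eq_smul {B : Matrix n n ℝ} {c : ℝ} {x : n → ℝ}
    (hx : x ⬝ᵥ x = 1) (h : B *ᵥ x = c • x) : c ^ 2 ≤ ∑ i, ∑ j, B i j ^ 2 := by
  have hx' : ∑ j, x j ^ 2 = 1 := by simpa only [dotProduct, ← sq] using hx
  calc c ^ 2 = ∑ i, (B *ᵥ x) i ^ 2 := by
        simp only [h, Pi.smul_apply, smul_eq_mul, mul_pow, ← Finset.mul_sum, hx', mul_one]
    _ ≤ ∑ i, (∑ j, B i j ^ 2) * ∑ j, x j ^ 2 :=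
        Finset.sum_le_sum fun i _ => Finset.sum_mul_sq_le_sq_mul_sq Finset.univ (B i) x
    _ = ∑ i, ∑ j, B i j ^ 2 := by simp only [hx', mul_one]

variable [DecidableEq n] {A : Matrix n n ℝ}

lemma dotProduct_eigenvectorBasis_self (hA : A.IsHermitian) (i : n) :
    (hA.eigenvectorBasis i).ofLp ⬝ᵥ (hA.eigenvectorBasis i).ofLp = 1 := by
  rw [dotProduct_self_eq_norm_sq, hA.eigenvectorBasis.norm_eq_one, one_pow]

lemma abs_eigenvalues_sub_one_le (hA : A.IsHermitian) (i : n) :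
    |hA.eigenvalues i - 1| ≤ √(∑ k, ∑ l, (A - 1) k l ^ 2) := by
  refine abs_le_sqrt (sq_le_sum_sq_of_mulVec_eq_smul (dotProduct_eigenvectorBasis_self hA i) ?_)
  rw [sub_mulVec, hA.mulVec_eigenvectorBasis, one_mulVec, sub_smul, one_smul]

lemma inner_eigenvectorBasis_inv_mulVec (hA : A.PosDef) (w : EuclideanSpace ℝ n) (i : n) :
    inner ℝ (hA.1.eigenvectorBasis i) (WithLp.toLp 2 (A⁻¹ *ᵥ w.ofLp)) =
      (hA.1.eigenvalues i)⁻¹ * inner ℝ (hA.1.eigenvectorBasis i) w := by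
  have hw : A *ᵥ (A⁻¹ *ᵥ w.ofLp) = w.ofLp := by
    rw [mulVec_mulVec, mul_nonsing_inv _ hA.det_pos.ne'.isUnit, one_mulVec]
  have hsymm : Aᵀ = A := by simpa only [conjTranspose_eq_transpose_of_trivial] using hA.1.eq
  rw [eq_inv_mul_iff_mul_eq₀ (hA.eigenvalues_pos i).ne']
  simp only [EuclideanSpace.inner_eq_star_dotProduct, star_trivial]
  calc hA.1.eigenvalues i * ((A⁻¹ *ᵥ w.ofLp) ⬝ᵥ (hA.1.eigenvectorBasis i).ofLp)
      = (A⁻¹ *ᵥ w.ofLp) ⬝ᵥ (A *ᵥ (hA.1.eigenvectorBasis i).ofLp) := by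
        rw [hA.1.mulVec_eigenvectorBasis, dotProduct_smul, smul_eq_mul]
    _ = w.ofLp ⬝ᵥ (hA.1.eigenvectorBasis i).ofLp := by
        rw [dotProduct_mulVec, ← mulVec_transpose, hsymm, hw]

lemma dotProduct_inv_mulVec_eq_sum (hA : A.PosDef) (w : EuclideanSpace ℝ n) :
    w.ofLp ⬝ᵥ (A⁻¹ *ᵥ w.ofLp) =
      ∑ i, (hA.1.eigenvalues i)⁻¹ * inner ℝ (hA.1.eigenvectorBasis i) w ^ 2 := by
  calc w.ofLp ⬝ᵥ (A⁻¹ *ᵥ w.ofLp) = inner ℝ w (WithLp.toLp 2 (A⁻¹ *ᵥ w.ofLp)) := by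
        rw [EuclideanSpace.inner_eq_star_dotProduct, star_trivial, dotProduct_comm]
    _ = ∑ i, inner ℝ w (hA.1.eigenvectorBasis i) *
          inner ℝ (hA.1.eigenvectorBasis i) (WithLp.toLp 2 (A⁻¹ *ᵥ w.ofLp)) :=
        (hA.1.eigenvectorBasis.sum_inner_mul_inner _ _).symm
    _ = ∑ i, (hA.1.eigenvalues i)⁻¹ * inner ℝ (hA.1.eigenvectorBasis i) w ^ 2 :=
      Finset.sum_congr rfl fun i _ => by
        rw [inner_eigenvectorBasis_inv_mulVec hA, real_inner_comm]
        ring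

lemma norm_sq_eq_sum_inner_eigenvectorBasis (hA : A.IsHermitian) (w : EuclideanSpace ℝ n) :
    ‖w‖ ^ 2 = ∑ i, inner ℝ (hA.eigenvectorBasis i) w ^ 2 := by
  simp only [← hA.eigenvectorBasis.sum_sq_norm_inner_right w, norm_eq_abs, sq_abs]

lemma mul_norm_sq_le_dotProduct_inv_mulVec (hA : A.PosDef) {K : ℝ}
    (hK : ∀ i, hA.1.eigenvalues i ≤ K) (w : EuclideanSpace ℝ n) :
    K⁻¹ * ‖w‖ ^ 2 ≤ w.ofLp ⬝ᵥ (A⁻¹ *ᵥ w.ofLp) := by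
  rw [dotProduct_inv_mulVec_eq_sum hA, norm_sq_eq_sum_inner_eigenvectorBasis hA.1, Finset.mul_sum]
  gcongr with i
  · exact hA.eigenvalues_pos i
  · exact hK i

lemma abs_dotProduct_inv_mulVec_sub_norm_sq_le (hA : A.PosDef) {δ : ℝ}
    (hδ : ∀ i, |(hA.1.eigenvalues i)⁻¹ - 1| ≤ δ) (w : EuclideanSpace ℝ n) :
    |w.ofLp ⬝ᵥ (A⁻¹ *ᵥ w.ofLp) - ‖w‖ ^ 2| ≤ δ * ‖w‖ ^ 2 := by
  rw [dotProduct_inv_mulVec_eq_sum hA, norm_sq_eq_sum_inner_eigenvectorBasis hA.1,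
    ← Finset.sum_sub_distrib, Finset.mul_sum]
  refine (Finset.abs_sum_le_sum_abs _ _).trans (Finset.sum_le_sum fun i _ => ?_)
  rw [← sub_one_mul, abs_mul, abs_sq]
  gcongr
  exact hδ i

lemma log_det_eq_sum_log_eigenvalues (hA : A.PosDef) :
    log A.det = ∑ i, log (hA.1.eigenvalues i) := by
  rw [hA.1.det_eq_prod_eigenvalues]
  exact log_prod fun i _ => (hA.eigenvalues_pos i).ne'

lemma abs_log_det_le (hA : A.PosDef) {δ : ℝ} (hδ : ∀ i, |log (hA.1.eigenvalues i)| ≤ δ) :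
    |log A.det| ≤ Fintype.card n * δ := by
  rw [log_det_eq_sum_log_eigenvalues hA, ← nsmul_eq_mul]
  exact (Finset.abs_sum_le_sum_abs _ _).trans (Finset.sum_le_card_nsmul _ _ _ fun i _ => hδ i)

lemma neg_card_mul_le_log_det (hA : A.PosDef) {K : ℝ} (hK : 0 < K)
    (hlo : ∀ i, K⁻¹ ≤ hA.1.eigenvalues i) : -(Fintype.card n * K) ≤ log A.det := by
  rw [log_det_eq_sum_log_eigenvalues hA, ← mul_neg, ← nsmul_eq_mul]
  refine Finset.card_nsmul_le_sum _ _ _ fun i _ => ?_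
  linarith [one_sub_inv_le_log_of_pos (hA.eigenvalues_pos i), inv_le_of_inv_le₀ hK (hlo i)]

end Spectral

section Gaussian

variable {n : Type*} [Fintype n] [DecidableEq n]

/-- Minus the logarithm of the Gaussian density with mean `u` and covariance `A`, up to the
constant `(card n / 2) * log (2 * π)`. The factor `(det A)^(-1/2)` is absorbed into the exponent,
so that perturbing it and perturbing the quadratic form become the same estimate. -/
noncomputable def gaussianPotential (u : EuclideanSpace ℝ n) (A : Matrix n n ℝ)
    (v : EuclideanSpace ℝ n) : ℝ :=
  (log A.det + (v - u).ofLp ⬝ᵥ (A⁻¹ *ᵥ (v - u).ofLp)) / 2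

/-- The density of the normal law on `ℝⁿ` with mean `u` and covariance matrix `A`, meaningful for
`A` positive definite. -/
noncomputable def anisotropicGaussian (u : EuclideanSpace ℝ n) (A : Matrix n n ℝ)
    (v : EuclideanSpace ℝ n) : ℝ :=
  (2 * π) ^ (-(Fintype.card n : ℝ) / 2) * exp (-gaussianPotential u A v)

lemma gaussianPotential_zero_one (v : EuclideanSpace ℝ n) :
    gaussianPotential 0 1 v = ‖v‖ ^ 2 / 2 := by
  rw [gaussianPotential, det_one, Real.log_one, zero_add, inv_one, one_mulVec, sub_zero,
    dotProduct_self_eq_norm_sq]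

lemma two_pi_rpow_neg_le_one (d : ℕ) : (2 * π) ^ (-(d : ℝ) / 2) ≤ 1 :=
  rpow_le_one_of_one_le_of_nonpos (by linarith [pi_gt_three])
    (by linarith [(d.cast_nonneg : (0 : ℝ) ≤ d)])

lemma exp_neg_gaussianPotential {A : Matrix n n ℝ} (hA : 0 < A.det) (u v : EuclideanSpace ℝ n) :
    exp (-gaussianPotential u A v) =
      (√A.det)⁻¹ * exp (-(1 / 2) * ((v - u).ofLp ⬝ᵥ (A⁻¹ *ᵥ (v - u).ofLp))) := by
  rw [← exp_log (inv_pos.2 (sqrt_pos.2 hA)), Real.log_inv, log_sqrt hA.le, ← exp_add,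
    gaussianPotential]
  congr 1
  ring

lemma sqrt_two_pi_smul_det_inv (A : Matrix n n ℝ) :
    (√((2 * π) • A).det)⁻¹ = (2 * π) ^ (-(Fintype.card n : ℝ) / 2) * (√A.det)⁻¹ := by
  have hpi : (0 : ℝ) ≤ 2 * π := two_pi_pos.le
  rw [det_smul, sqrt_mul (pow_nonneg hpi _), mul_inv, neg_div, rpow_neg hpi, sqrt_eq_rpow,
    ← Real.rpow_natCast, ← Real.rpow_mul hpi, mul_one_div]

lemma anisotropicGaussian_eq {A : Matrix n n ℝ} (hA : 0 < A.det) (u v : EuclideanSpace ℝ n) :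
    anisotropicGaussian u A v = (√((2 * π) • A).det)⁻¹ *
      exp (-(1 / 2) * ((v - u).ofLp ⬝ᵥ (A⁻¹ *ᵥ (v - u).ofLp))) := by
  rw [anisotropicGaussian, exp_neg_gaussianPotential hA, sqrt_two_pi_smul_det_inv, mul_assoc]

variable {A : Matrix n n ℝ} {K : ℝ}

lemma le_gaussianPotential (hA : A.PosDef) (hK : 0 < K) (hlo : ∀ i, K⁻¹ ≤ hA.1.eigenvalues i)
    (hhi : ∀ i, hA.1.eigenvalues i ≤ K) {u : EuclideanSpace ℝ n} (hu : ‖u‖ ≤ K)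
    (v : EuclideanSpace ℝ n) :
    ‖v‖ ^ 2 / (4 * K) - (Fintype.card n + 1) * K / 2 ≤ gaussianPotential u A v := by
  have hv : ‖v‖ ^ 2 ≤ 2 * (‖v - u‖ ^ 2 + K ^ 2) :=
    calc ‖v‖ ^ 2 = ‖(v - u) - (-u)‖ ^ 2 := by rw [sub_neg_eq_add, sub_add_cancel]
      _ ≤ 2 * (‖v - u‖ ^ 2 + ‖-u‖ ^ 2) := norm_sub_sq_le_two_mul _ _
      _ ≤ 2 * (‖v - u‖ ^ 2 + K ^ 2) := by rw [norm_neg]; gcongr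
  have hquad : ‖v‖ ^ 2 / (4 * K) - K / 2 ≤ K⁻¹ * ‖v - u‖ ^ 2 / 2 := by
    field_simp
    linarith
  have := mul_norm_sq_le_dotProduct_inv_mulVec hA hhi (v - u)
  have := neg_card_mul_le_log_det hA hK hlo
  rw [gaussianPotential]
  linarith

lemma abs_gaussianPotential_sub_le (hA : A.PosDef) (hK : 1 ≤ K)
    (hlo : ∀ i, K⁻¹ ≤ hA.1.eigenvalues i) {δ : ℝ} (hδ : ∀ i, |hA.1.eigenvalues i - 1| ≤ δ)
    (u v : EuclideanSpace ℝ n) :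
    |gaussianPotential u A v - ‖v‖ ^ 2 / 2| ≤
      (Fintype.card n * (K * δ) + K * δ * ‖v - u‖ ^ 2 + ‖u‖ * (2 * ‖v‖ + ‖u‖)) / 2 := by
  have hK0 : 0 < K := one_pos.trans_le hK
  have hdet : |log A.det| ≤ Fintype.card n * (K * δ) :=
    abs_log_det_le hA fun i => (abs_log_le_mul_abs_sub_one hK (hlo i)).trans (by gcongr; exact hδ i)
  have hcov : |(v - u).ofLp ⬝ᵥ (A⁻¹ *ᵥ (v - u).ofLp) - ‖v - u‖ ^ 2| ≤ K * δ * ‖v - u‖ ^ 2 :=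
    abs_dotProduct_inv_mulVec_sub_norm_sq_le hA
      (fun i => (abs_inv_sub_one_le hK0 (hlo i)).trans (by gcongr; exact hδ i)) _
  calc |gaussianPotential u A v - ‖v‖ ^ 2 / 2|
      = |log A.det + ((v - u).ofLp ⬝ᵥ (A⁻¹ *ᵥ (v - u).ofLp) - ‖v - u‖ ^ 2)
          + (‖v - u‖ ^ 2 - ‖v‖ ^ 2)| / 2 := by
        rw [gaussianPotential, ← sub_div, abs_div, abs_two]
        congr 2
        ring
    _ ≤ (Fintype.card n * (K * δ) + K * δ * ‖v - u‖ ^ 2 + ‖u‖ * (2 * ‖v‖ + ‖u‖)) / 2 := by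
        gcongr
        refine (abs_add_three _ _ _).trans ?_
        gcongr
        exact abs_norm_sub_sq_sub_norm_sq_le v u

lemma abs_gaussianPotential_sub_le_mul_one_add_norm_sq (hA : A.PosDef) (hK : 1 ≤ K)
    (hlo : ∀ i, K⁻¹ ≤ hA.1.eigenvalues i) {δ : ℝ} (hδ0 : 0 ≤ δ)
    (hδ : ∀ i, |hA.1.eigenvalues i - 1| ≤ δ) {u : EuclideanSpace ℝ n} (hu : ‖u‖ ≤ K)
    (v : EuclideanSpace ℝ n) :
    |gaussianPotential u A v - ‖v‖ ^ 2 / 2| ≤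
      (Fintype.card n + 2) * (K ^ 3 * (1 + ‖v‖ ^ 2)) * (‖u‖ + δ) / 2 := by
  have : 0 < K := one_pos.trans_le hK
  have hnorm : ‖v - u‖ ^ 2 ≤ 2 * (‖v‖ ^ 2 + K ^ 2) :=
    (norm_sub_sq_le_two_mul v u).trans (by gcongr)
  have hcoeff_δ := mul_add_two_mul_sq_add_sq_le hK (Fintype.card n).cast_nonneg ‖v‖
  have hcoeff_u : 2 * ‖v‖ + ‖u‖ ≤ (Fintype.card n + 2) * (K ^ 3 * (1 + ‖v‖ ^ 2)) :=
    (two_mul_add_le_mul_one_add_sq hK hu).trans <| by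
      gcongr
      exact le_add_of_nonneg_left (Nat.cast_nonneg _)
  calc |gaussianPotential u A v - ‖v‖ ^ 2 / 2|
      ≤ (Fintype.card n * (K * δ) + K * δ * (2 * (‖v‖ ^ 2 + K ^ 2))
          + ‖u‖ * (2 * ‖v‖ + ‖u‖)) / 2 :=
        (abs_gaussianPotential_sub_le hA hK hlo hδ u v).trans (by gcongr)
    _ = (‖u‖ * (2 * ‖v‖ + ‖u‖) + K * (Fintype.card n + 2 * (‖v‖ ^ 2 + K ^ 2)) * δ) / 2 := by
        ring
    _ ≤ (‖u‖ * ((Fintype.card n + 2) * (K ^ 3 * (1 + ‖v‖ ^ 2)))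
          + (Fintype.card n + 2) * (K ^ 3 * (1 + ‖v‖ ^ 2)) * δ) / 2 := by
        gcongr
    _ = (Fintype.card n + 2) * (K ^ 3 * (1 + ‖v‖ ^ 2)) * (‖u‖ + δ) / 2 := by ring

lemma anisotropicGaussian_le (hA : A.PosDef) (hK : 0 < K) (hlo : ∀ i, K⁻¹ ≤ hA.1.eigenvalues i)
    (hhi : ∀ i, hA.1.eigenvalues i ≤ K) {u : EuclideanSpace ℝ n} (hu : ‖u‖ ≤ K)
    (v : EuclideanSpace ℝ n) :
    anisotropicGaussian u A v ≤
      exp ((Fintype.card n + 1) * K / 2) * exp (-(‖v‖ ^ 2 / (8 * K))) :=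
  calc anisotropicGaussian u A v ≤ exp (-gaussianPotential u A v) :=
        mul_le_of_le_one_left (exp_pos _).le (two_pi_rpow_neg_le_one _)
    _ ≤ exp (-(‖v‖ ^ 2 / (4 * K) - (Fintype.card n + 1) * K / 2)) :=
        exp_le_exp.2 (neg_le_neg (le_gaussianPotential hA hK hlo hhi hu v))
    _ ≤ exp ((Fintype.card n + 1) * K / 2) * exp (-(‖v‖ ^ 2 / (8 * K))) := by
        rw [exp_neg_div_sub_eq]
        exact mul_le_of_le_one_right (by positivity)
          (exp_le_one_iff.2 (neg_nonpos.2 (by positivity)))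

lemma abs_anisotropicGaussian_sub_le (hA : A.PosDef) (hK : 1 ≤ K)
    (hlo : ∀ i, K⁻¹ ≤ hA.1.eigenvalues i) (hhi : ∀ i, hA.1.eigenvalues i ≤ K) {δ : ℝ}
    (hδ0 : 0 ≤ δ) (hδ : ∀ i, |hA.1.eigenvalues i - 1| ≤ δ) {u : EuclideanSpace ℝ n}
    (hu : ‖u‖ ≤ K) (v : EuclideanSpace ℝ n) :
    |anisotropicGaussian u A v - anisotropicGaussian 0 1 v| ≤
      4 * (Fintype.card n + 2) * K ^ 4 * exp ((Fintype.card n + 1) * K / 2) * (‖u‖ + δ) *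
        exp (-(‖v‖ ^ 2 / (8 * K))) := by
  have hK0 : 0 < K := one_pos.trans_le hK
  set b := (Fintype.card n + 1) * K / 2
  set s := ‖v‖ ^ 2
  have hu' : s / (4 * K) - b ≤ gaussianPotential u A v := le_gaussianPotential hA hK0 hlo hhi hu v
  have h0 : s / (4 * K) - b ≤ s / 2 :=
    calc s / (4 * K) - b ≤ s / (4 * K) := sub_le_self _ (by positivity)
      _ ≤ s / 2 := by gcongr; linarith
  have hpoly : (1 + s) * exp (-(s / (8 * K))) ≤ 8 * K := one_add_mul_exp_neg_div_le (by linarith) s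
  calc |anisotropicGaussian u A v - anisotropicGaussian 0 1 v|
      = (2 * π) ^ (-(Fintype.card n : ℝ) / 2) *
          |exp (-gaussianPotential u A v) - exp (-(s / 2))| := by
        rw [anisotropicGaussian, anisotropicGaussian, gaussianPotential_zero_one, ← mul_sub,
          abs_mul, abs_of_pos (by positivity)]
    _ ≤ |exp (-gaussianPotential u A v) - exp (-(s / 2))| :=
        mul_le_of_le_one_left (abs_nonneg _) (two_pi_rpow_neg_le_one _)
    _ ≤ |gaussianPotential u A v - s / 2| * exp (-(s / (4 * K) - b)) :=
        abs_exp_neg_sub_exp_neg_le hu' h0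
    _ ≤ (Fintype.card n + 2) * (K ^ 3 * (1 + s)) * (‖u‖ + δ) / 2 * exp (-(s / (4 * K) - b)) := by
        gcongr
        exact abs_gaussianPotential_sub_le_mul_one_add_norm_sq hA hK hlo hδ0 hδ hu v
    _ = (Fintype.card n + 2) * K ^ 3 / 2 * ((1 + s) * exp (-(s / (8 * K)))) *
          exp b * (‖u‖ + δ) * exp (-(s / (8 * K))) := by
        rw [exp_neg_div_sub_eq]
        ring
    _ ≤ (Fintype.card n + 2) * K ^ 3 / 2 * (8 * K) *
          exp b * (‖u‖ + δ) * exp (-(s / (8 * K))) := by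
        gcongr
    _ = 4 * (Fintype.card n + 2) * K ^ 4 * exp b * (‖u‖ + δ) * exp (-(s / (8 * K))) := by ring

lemma abs_mul_anisotropicGaussian_sub_le (hA : A.PosDef) (hK : 1 ≤ K)
    (hlo : ∀ i, K⁻¹ ≤ hA.1.eigenvalues i) (hhi : ∀ i, hA.1.eigenvalues i ≤ K)
    {u : EuclideanSpace ℝ n} (hu : ‖u‖ ≤ K) {C : ℝ}
    (hC : 4 * (Fintype.card n + 2) * K ^ 4 * exp ((Fintype.card n + 1) * K / 2) ≤ C) (ρ : ℝ)
    (v : EuclideanSpace ℝ n) :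
    |ρ * anisotropicGaussian u A v - anisotropicGaussian 0 1 v| ≤
      C * (|ρ - 1| + ‖u‖ + √(∑ i, ∑ j, (A - 1) i j ^ 2)) * exp (-(‖v‖ ^ 2 / (8 * K))) := by
  have hK0 : 0 < K := one_pos.trans_le hK
  set b := exp ((Fintype.card n + 1) * K / 2)
  set δ := √(∑ i, ∑ j, (A - 1) i j ^ 2)
  have hbC : b ≤ C := hC.trans' <| le_mul_of_one_le_left (exp_pos _).le <|
    one_le_mul_of_one_le_of_one_le (by linarith [(Fintype.card n).cast_nonneg (α := ℝ)])
      (one_le_pow₀ hK)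
  have hG0 : 0 ≤ anisotropicGaussian u A v := by rw [anisotropicGaussian]; positivity
  have hmass : anisotropicGaussian u A v ≤ C * exp (-(‖v‖ ^ 2 / (8 * K))) :=
    (anisotropicGaussian_le hA hK0 hlo hhi hu v).trans (by gcongr)
  have hshape : |anisotropicGaussian u A v - anisotropicGaussian 0 1 v| ≤
      C * (‖u‖ + δ) * exp (-(‖v‖ ^ 2 / (8 * K))) :=
    (abs_anisotropicGaussian_sub_le hA hK hlo hhi (sqrt_nonneg _)
      (abs_eigenvalues_sub_one_le hA.1) hu v).trans (by gcongr)
  calc |ρ * anisotropicGaussian u A v - anisotropicGaussian 0 1 v|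
      = |(ρ - 1) * anisotropicGaussian u A v
          + (anisotropicGaussian u A v - anisotropicGaussian 0 1 v)| := by
        congr 1
        ring
    _ ≤ |ρ - 1| * anisotropicGaussian u A v
          + |anisotropicGaussian u A v - anisotropicGaussian 0 1 v| := by
        refine (abs_add_le _ _).trans_eq ?_
        rw [abs_mul, abs_of_nonneg hG0]
    _ ≤ |ρ - 1| * (C * exp (-(‖v‖ ^ 2 / (8 * K))))
          + C * (‖u‖ + δ) * exp (-(‖v‖ ^ 2 / (8 * K))) := by
        gcongr
    _ = C * (|ρ - 1| + ‖u‖ + δ) * exp (-(‖v‖ ^ 2 / (8 * K))) := by ring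

lemma exists_abs_mul_anisotropicGaussian_sub_le (n : Type*) [Fintype n] [DecidableEq n] {K : ℝ}
    (hK : 1 ≤ K) :
    ∃ C > (0 : ℝ), ∀ (A : Matrix n n ℝ) (hA : A.PosDef), (∀ i, K⁻¹ ≤ hA.1.eigenvalues i) →
      (∀ i, hA.1.eigenvalues i ≤ K) → ∀ u : EuclideanSpace ℝ n, ‖u‖ ≤ K →
      ∀ (ρ : ℝ) (v : EuclideanSpace ℝ n),
        |ρ * anisotropicGaussian u A v - anisotropicGaussian 0 1 v| ≤
          C * (|ρ - 1| + ‖u‖ + √(∑ i, ∑ j, (A - 1) i j ^ 2)) * exp (-‖v‖ ^ 2 / C) := by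
  have h8K : 0 < 8 * K := by linarith
  obtain ⟨C, hKC, hC⟩ : ∃ C, 8 * K ≤ C ∧
      4 * (Fintype.card n + 2) * K ^ 4 * exp ((Fintype.card n + 1) * K / 2) ≤ C :=
    ⟨max _ _, le_max_left _ _, le_max_right _ _⟩
  refine ⟨C, h8K.trans_le hKC, fun A hA hlo hhi u hu ρ v => ?_⟩
  have hC0 : 0 ≤ C := h8K.le.trans hKC
  refine (abs_mul_anisotropicGaussian_sub_le hA hK hlo hhi hu hC ρ v).trans ?_
  rw [neg_div]
  gcongr

end Gaussian

section SecondMoment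

lemma integrable_norm_sub_sq_mul {E : Type*} [NormedAddCommGroup E] [MeasurableSpace E]
    [OpensMeasurableSpace E] {m : Measure E} {g : E → ℝ} (hg : Integrable g m)
    (hg2 : Integrable (fun v => ‖v‖ ^ 2 * g v) m) (a : E) :
    Integrable (fun v => ‖v - a‖ ^ 2 * g v) m := by
  have hmeas : AEStronglyMeasurable (fun v => ‖v - a‖ ^ 2 * g v) m :=
    (Continuous.aestronglyMeasurable (by fun_prop)).mul hg.1
  refine Integrable.mono' ((hg2.norm.add (hg.norm.const_mul (‖a‖ ^ 2))).const_mul 2) hmeas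
    (ae_of_all _ fun v => ?_)
  calc ‖‖v - a‖ ^ 2 * g v‖ = ‖v - a‖ ^ 2 * ‖g v‖ := by rw [norm_mul, norm_pow, norm_norm]
    _ ≤ 2 * (‖v‖ ^ 2 + ‖a‖ ^ 2) * ‖g v‖ := by gcongr; exact norm_sub_sq_le_two_mul v a
    _ = 2 * (‖‖v‖ ^ 2 * g v‖ + ‖a‖ ^ 2 * ‖g v‖) := by rw [norm_mul, norm_pow, norm_norm]; ring

variable {n : Type*}

/-- The matrix `∫ (v - a) ⊗ (v - a) g dm` of second moments, about `a`, of the measure with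
density `g` with respect to `m`. -/
noncomputable def secondMoment (m : Measure (EuclideanSpace ℝ n)) (g : EuclideanSpace ℝ n → ℝ)
    (a : EuclideanSpace ℝ n) : Matrix n n ℝ :=
  Matrix.of fun i j => ∫ v, (v - a) i * (v - a) j * g v ∂m

lemma secondMoment_isHermitian (m : Measure (EuclideanSpace ℝ n)) (g : EuclideanSpace ℝ n → ℝ)
    (a : EuclideanSpace ℝ n) : (secondMoment m g a).IsHermitian := by
  ext i j
  simp only [secondMoment, conjTranspose_apply, Matrix.of_apply, star_trivial,
    mul_comm ((_ - a : EuclideanSpace ℝ n) i)]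

variable [Fintype n] {m : Measure (EuclideanSpace ℝ n)} {g : EuclideanSpace ℝ n → ℝ}
  {a : EuclideanSpace ℝ n}

lemma integrable_apply_mul_apply_mul (hg : AEStronglyMeasurable g m)
    (hg2 : Integrable (fun v => ‖v - a‖ ^ 2 * g v) m) (i j : n) :
    Integrable (fun v => (v - a) i * (v - a) j * g v) m := by
  refine hg2.mono ((Continuous.aestronglyMeasurable (by fun_prop)).mul hg) (ae_of_all _ fun v => ?_)
  simp only [norm_mul, norm_norm, sq]
  gcongr <;> exact PiLp.norm_apply_le _ _

lemma dotProduct_secondMoment_mulVec (hg : AEStronglyMeasurable g m)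
    (hg2 : Integrable (fun v => ‖v - a‖ ^ 2 * g v) m) (x : n → ℝ) :
    x ⬝ᵥ (secondMoment m g a *ᵥ x) = ∫ v, (x ⬝ᵥ (v - a).ofLp) ^ 2 * g v ∂m := by
  have hexpand : ∀ v : EuclideanSpace ℝ n, (x ⬝ᵥ (v - a).ofLp) ^ 2 * g v =
      ∑ i, ∑ j, x i * x j * ((v - a) i * (v - a) j * g v) := fun v => by
    rw [dotProduct, sq, Finset.sum_mul_sum]
    simp only [Finset.sum_mul]
    exact Finset.sum_congr rfl fun i _ => Finset.sum_congr rfl fun j _ => by ring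
  have hint := fun i j => (integrable_apply_mul_apply_mul hg hg2 i j).const_mul (x i * x j)
  simp_rw [hexpand]
  rw [integral_finsetSum _ fun i _ => integrable_finsetSum _ fun j _ => hint i j]
  simp_rw [integral_finsetSum _ fun j _ => hint _ j, integral_const_mul]
  simp only [dotProduct, mulVec, secondMoment, Matrix.of_apply, Finset.mul_sum]
  exact Finset.sum_congr rfl fun i _ => Finset.sum_congr rfl fun j _ => by ring

lemma dotProduct_secondMoment_mulVec_nonneg (hg0 : 0 ≤ᵐ[m] g) (hg : AEStronglyMeasurable g m)
    (hg2 : Integrable (fun v => ‖v - a‖ ^ 2 * g v) m) (x : n → ℝ) :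
    0 ≤ x ⬝ᵥ (secondMoment m g a *ᵥ x) := by
  rw [dotProduct_secondMoment_mulVec hg hg2]
  exact integral_nonneg_of_ae (hg0.mono fun v hv => mul_nonneg (sq_nonneg _) hv)

lemma dotProduct_secondMoment_mulVec_le (hg0 : 0 ≤ᵐ[m] g) (hg : AEStronglyMeasurable g m)
    (hg2 : Integrable (fun v => ‖v - a‖ ^ 2 * g v) m) (x : n → ℝ) :
    x ⬝ᵥ (secondMoment m g a *ᵥ x) ≤ (x ⬝ᵥ x) * ∫ v, ‖v - a‖ ^ 2 * g v ∂m := by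
  have hcauchy : ∀ w : EuclideanSpace ℝ n, (x ⬝ᵥ w.ofLp) ^ 2 ≤ (x ⬝ᵥ x) * ‖w‖ ^ 2 := fun w => by
    rw [← dotProduct_self_eq_norm_sq]
    simpa only [dotProduct, ← sq] using Finset.sum_mul_sq_le_sq_mul_sq Finset.univ x w.ofLp
  rw [dotProduct_secondMoment_mulVec hg hg2, ← integral_const_mul]
  refine integral_mono_of_nonneg (hg0.mono fun v hv => mul_nonneg (sq_nonneg _) hv)
    (hg2.const_mul _) (hg0.mono fun v hv => ?_)
  simpa only [mul_assoc] using mul_le_mul_of_nonneg_right (hcauchy (v - a)) hv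

end SecondMoment

section TemperatureTensor

variable {g : E3 → ℝ}

lemma stress_eq_smul_secondMoment (g : E3 → ℝ) :
    stress g = (dens g)⁻¹ • secondMoment volume g (bulk g) := rfl

lemma dotProduct_stress_mulVec_mem_Icc (hg0 : 0 ≤ᵐ[volume] g) (hg : Integrable g)
    (hg2 : Integrable fun v => ‖v‖ ^ 2 * g v) (x : Fin 3 → ℝ) :
    x ⬝ᵥ (stress g *ᵥ x) ∈ Set.Icc 0 (3 * temp g * (x ⬝ᵥ x)) := by
  have hρ : 0 ≤ (dens g)⁻¹ := inv_nonneg.2 (integral_nonneg_of_ae hg0)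
  have hcentred := integrable_norm_sub_sq_mul hg hg2 (bulk g)
  rw [stress_eq_smul_secondMoment, smul_mulVec, dotProduct_smul, smul_eq_mul]
  refine ⟨mul_nonneg hρ (dotProduct_secondMoment_mulVec_nonneg hg0 hg.1 hcentred x), ?_⟩
  calc (dens g)⁻¹ * (x ⬝ᵥ (secondMoment volume g (bulk g) *ᵥ x))
      ≤ (dens g)⁻¹ * ((x ⬝ᵥ x) * ∫ v, ‖v - bulk g‖ ^ 2 * g v) := by
        gcongr
        exact dotProduct_secondMoment_mulVec_le hg0 hg.1 hcentred x
    _ = 3 * temp g * (x ⬝ᵥ x) := by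
        rw [temp, mul_inv]
        ring

lemma tempTensor_isHermitian (g : E3 → ℝ) (ν : ℝ) : (tempTensor g ν).IsHermitian := by
  rw [tempTensor, stress_eq_smul_secondMoment]
  exact (isHermitian_one.smul (IsSelfAdjoint.all _)).add
    (((secondMoment_isHermitian _ _ _).smul (IsSelfAdjoint.all _)).smul (IsSelfAdjoint.all _))

lemma eigenvalues_tempTensor_eq (g : E3 → ℝ) (ν : ℝ) (i : Fin 3) :
    ∃ x : Fin 3 → ℝ, x ⬝ᵥ x = 1 ∧ (tempTensor_isHermitian g ν).eigenvalues i =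
      (1 - ν) * temp g + ν * (x ⬝ᵥ (stress g *ᵥ x)) := by
  have hA := tempTensor_isHermitian g ν
  have hunit := dotProduct_eigenvectorBasis_self hA i
  refine ⟨(hA.eigenvectorBasis i).ofLp, hunit, ?_⟩
  rw [hA.eigenvalues_eq, star_trivial, RCLike.re_to_real]
  generalize (hA.eigenvectorBasis i).ofLp = x at hunit ⊢
  rw [tempTensor, add_mulVec, smul_mulVec, smul_mulVec, one_mulVec, dotProduct_add,
    dotProduct_smul, dotProduct_smul, hunit, smul_eq_mul, smul_eq_mul, mul_one]

lemma eigenvalues_tempTensor_mem_Icc (hg0 : 0 ≤ᵐ[volume] g) (hg : Integrable g)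
    (hg2 : Integrable fun v => ‖v‖ ^ 2 * g v) (ν : ℝ) (i : Fin 3) :
    (tempTensor_isHermitian g ν).eigenvalues i ∈
      Set.Icc (min (1 - ν) (1 + 2 * ν) * temp g) (max (1 - ν) (1 + 2 * ν) * temp g) := by
  obtain ⟨x, hunit, heq⟩ := eigenvalues_tempTensor_eq g ν i
  obtain ⟨hθ0, hθT⟩ := dotProduct_stress_mulVec_mem_Icc hg0 hg hg2 x
  rw [hunit, mul_one] at hθT
  rw [heq]
  -- `(1 - ν) T + ν θ` interpolates between `(1 - ν) T` and `(1 + 2 ν) T` as `θ` runs over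
  -- `[0, 3 T]`; the sign of `ν` decides which end is the larger.
  rcases le_total 0 ν with hν | hν
  · rw [min_eq_left (by linarith), max_eq_right (by linarith)]
    constructor <;> nlinarith
  · rw [min_eq_right (by linarith), max_eq_left (by linarith)]
    constructor <;> nlinarith

lemma Mw_eq_anisotropicGaussian (v : E3) : Mw v = anisotropicGaussian 0 1 v := by
  rw [Mw, anisotropicGaussian, gaussianPotential_zero_one, Fintype.card_fin, neg_div 2 (‖v‖ ^ 2)]
  norm_cast

lemma aGauss_eq_mul_anisotropicGaussian {ν : ℝ} (hdet : 0 < (tempTensor g ν).det) (v : E3) :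
    aGauss g ν v = dens g * anisotropicGaussian (bulk g) (tempTensor g ν) v := by
  rw [anisotropicGaussian_eq hdet, ← mul_assoc, ← div_eq_mul_inv]
  rfl

end TemperatureTensor

theorem aGauss_minus_maxwellian_bound_general {ν τ : ℝ} (R : ℝ) (hν1 : -(1 / 2 : ℝ) < ν)
    (hν2 : ν < 1) (hτ : 0 < τ) :
    ∃ C > (0 : ℝ), ∀ g : E3 → ℝ,
      0 ≤ᵐ[volume] g → Integrable g → Integrable (fun v => ‖v‖ ^ 2 * g v) →
      τ ≤ temp g → temp g ≤ R → ‖bulk g‖ ≤ R →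
      ∀ v : E3,
        |aGauss g ν v - Mw v| ≤
          C * (|dens g - 1| + ‖bulk g‖ + frobNorm (tempTensor g ν - 1)) *
            exp (-‖v‖ ^ 2 / C) := by
  set lo := min (1 - ν) (1 + 2 * ν)
  set hi := max (1 - ν) (1 + 2 * ν)
  have hlo0 : 0 < lo := lt_min (by linarith) (by linarith)
  have hhi0 : 0 < hi := lt_max_of_lt_left (by linarith)
  obtain ⟨K, hK, hRK, hhiK, hloK⟩ : ∃ K, 1 ≤ K ∧ R ≤ K ∧ hi * R ≤ K ∧ (lo * τ)⁻¹ ≤ K :=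
    ⟨max (max 1 R) (max (hi * R) (lo * τ)⁻¹), by simp, by simp, by simp, by simp⟩
  obtain ⟨C, hC, hbound⟩ := exists_abs_mul_anisotropicGaussian_sub_le (Fin 3) hK
  refine ⟨C, hC, fun g hg0 hg hg2 hτT hTR hu v => ?_⟩
  have hspec := eigenvalues_tempTensor_mem_Icc hg0 hg hg2 ν
  have hmin : ∀ i, lo * τ ≤ (tempTensor_isHermitian g ν).eigenvalues i := fun i =>
    (mul_le_mul_of_nonneg_left hτT hlo0.le).trans (hspec i).1
  have hmax : ∀ i, (tempTensor_isHermitian g ν).eigenvalues i ≤ K := fun i =>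
    (hspec i).2.trans ((mul_le_mul_of_nonneg_left hTR hhi0.le).trans hhiK)
  have hpos : (tempTensor g ν).PosDef := (tempTensor_isHermitian g ν).posDef_iff_eigenvalues_pos.2
    fun i => (mul_pos hlo0 hτ).trans_le (hmin i)
  rw [aGauss_eq_mul_anisotropicGaussian hpos.det_pos, Mw_eq_anisotropicGaussian]
  exact hbound _ hpos (fun i => (inv_le_of_inv_le₀ (mul_pos hlo0 hτ) hloK).trans (hmin i)) hmax
    _ (hu.trans hRK) _ v

/-- estimate (4.7): closeness of the anisotropic Gaussian to the global
Maxwellian in terms of the macroscopic quantities. -/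
theorem aGauss_minus_maxwellian_bound
    (ν C1 : ℝ) (hν1 : -(1 / 2 : ℝ) < ν) (hν2 : ν < 1) (hC1 : 1 ≤ C1) :
    ∃ C > (0 : ℝ), ∀ g : E3 → ℝ,
      Measurable g → (∀ v, 0 ≤ g v) →
      Integrable g → Integrable (fun v => ‖v‖ ^ 2 * g v) →
      (2 * C1)⁻¹ ≤ dens g → dens g ≤ 2 * C1 →
      (2 * C1)⁻¹ ≤ temp g → temp g ≤ 2 * C1 → ‖bulk g‖ ≤ 2 * C1 →
      ∀ v : E3,
        |aGauss g ν v - Mw v| ≤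
          C * (|dens g - 1| + ‖bulk g‖ + frobNorm (tempTensor g ν - 1)) *
            Real.exp (-‖v‖ ^ 2 / C) := by
  obtain ⟨C, hC, hbound⟩ := aGauss_minus_maxwellian_bound_general (τ := (2 * C1)⁻¹) (2 * C1)
    hν1 hν2 (inv_pos.2 (by linarith))
  exact ⟨C, hC, fun g _ hg0 hg hg2 _ _ => hbound g (ae_of_all _ hg0) hg hg2⟩
end
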